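/- arXiv:2001.00882 — 3 statements merged into one kernel-verified Lean document; each statement's English description precedes it below -/
import Mathlib

section
/- Assume Conditions (C). Then for any sequences 0 < i_n < l_n with l_n = o(n), the weights at positions i_n and l_n of the size-biased random order without replacement satisfy E[w_{v(i_n)}·w_{v(l_n)}] = 1 + o(1) as n → ∞. -/
open MeasureTheory Filter Asymptotics
open scoped Classical ENNReal Topology

noncomputable section

/-- `ℓ_n`: the total weight. -/
def ell (w : ∀ n : ℕ, Fin n → ℝ) (n : ℕ) : ℝ := ∑ i, w n i

/-- Conditions (C) on the triangular array of weights, relative to the law `μ` of the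
limiting random variable `W`. -/
structure CondC (w : ∀ n : ℕ, Fin n → ℝ) (μ : Measure ℝ) : Prop where
  isProb : IsProbabilityMeasure μ
  pos : ∀ᵐ x ∂μ, 0 < x
  w_pos : ∀ n, ∀ i : Fin n, 0 < w n i
  w_anti : ∀ n, ∀ i j : Fin n, i ≤ j → w n j ≤ w n i
  int3 : Integrable (fun x => x ^ 3) μ
  moment_eq : ∫ x, x ^ 2 ∂μ = ∫ x, x ∂μ
  weak : ∀ g : BoundedContinuousFunction ℝ ℝ,
    Tendsto (fun n : ℕ => (∑ i : Fin n, g (w n i)) / (n : ℝ)) atTop (𝓝 (∫ x, g x ∂μ))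
  ell_asymp : (fun n : ℕ => ell w n - (∫ x, x ∂μ) * (n : ℝ)) =o[atTop]
      fun n : ℕ => (n : ℝ) ^ ((2 : ℝ) / 3)
  sq_asymp : (fun n : ℕ => (∑ i : Fin n, (w n i) ^ 2) - (∫ x, x ^ 2 ∂μ) * (n : ℝ)) =o[atTop]
      fun n : ℕ => (n : ℝ) ^ ((2 : ℝ) / 3)
  cube_asymp : (fun n : ℕ => (∑ i : Fin n, (w n i) ^ 3) - (∫ x, x ^ 3 ∂μ) * (n : ℝ)) =o[atTop]
      fun _ : ℕ => (1 : ℝ)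
  max_asymp : (fun n : ℕ => ⨆ i : Fin n, w n i) =o[atTop] fun n : ℕ => (n : ℝ) ^ ((1 : ℝ) / 3)

/-- The constant `C = E[W³]/E[W]`. -/
def Cconst (μ : Measure ℝ) : ℝ := (∫ x, x ^ 3 ∂μ) / (∫ x, x ∂μ)

/-- The critical percolation parameter `p_f = (ℓ_n^{1/3} + f_n)/ℓ_n^{4/3}`. -/
def pf (w : ∀ n : ℕ, Fin n → ℝ) (f : ℕ → ℝ) (n : ℕ) : ℝ :=
  (ell w n ^ ((1 : ℝ) / 3) + f n) / ell w n ^ ((4 : ℝ) / 3)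

/-- A Bernoulli-type measure on `Bool` with parameter `p`. -/
def bern (p : ℝ) : Measure Bool :=
  ENNReal.ofReal (1 - p) • Measure.dirac false + ENNReal.ofReal p • Measure.dirac true

/-- The law of the independent edge indicators of the rank-1 inhomogeneous random graph
`G(W,p)`: the indicator attached to the (ordered) pair `(i,j)` is Bernoulli with success
probability `1 - exp (- w i * w j * p)`, all independent. -/
def graphMeasure (n : ℕ) (wn : Fin n → ℝ) (p : ℝ) : Measure (Fin n → Fin n → Bool) :=
  Measure.pi fun i => Measure.pi fun j => bern (1 - Real.exp (-(wn i * wn j * p)))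

/-- The simple graph built from a sample of edge indicators: `i ~ j` iff `i ≠ j` and the
indicator of the pair `(min i j, max i j)` is `true`. -/
def graphOf {n : ℕ} (ω : Fin n → Fin n → Bool) : SimpleGraph (Fin n) :=
  SimpleGraph.fromRel fun i j => ω (min i j) (max i j) = true

/-- The size (number of vertices) of a connected component. -/
def csize {n : ℕ} (G : SimpleGraph (Fin n)) (c : G.ConnectedComponent) : ℕ :=
  Nat.card {v : Fin n // G.connectedComponentMk v = c}

/-- The weight of a connected component: sum of the weights of its vertices. -/
def cweight {n : ℕ} (wn : Fin n → ℝ) (G : SimpleGraph (Fin n)) (c : G.ConnectedComponent) : ℝ :=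
  ∑ v : Fin n, if G.connectedComponentMk v = c then wn v else 0

/-- The number of edges of a connected component. -/
def cedges {n : ℕ} (G : SimpleGraph (Fin n)) (c : G.ConnectedComponent) : ℕ :=
  Nat.card {e : Sym2 (Fin n) // e ∈ G.edgeSet ∧ ∀ v ∈ e, G.connectedComponentMk v = c}

/-- The surplus (excess) of a connected component: edges − vertices + 1. -/
def csurplus {n : ℕ} (G : SimpleGraph (Fin n)) (c : G.ConnectedComponent) : ℤ :=
  (cedges G c : ℤ) - (csize G c : ℤ) + 1

/-- `c` is a largest connected component. -/
def isLargest {n : ℕ} (G : SimpleGraph (Fin n)) (c : G.ConnectedComponent) : Prop :=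
  ∀ c', csize G c' ≤ csize G c

/-- The finset of connected components of a graph on `Fin n`. -/
def comps {n : ℕ} (G : SimpleGraph (Fin n)) : Finset G.ConnectedComponent :=
  Finset.univ.image G.connectedComponentMk

/-- The law of the size-biased random order without replacement `(v(1),…,v(n))`, seen as a
measure on functions `Fin n → Fin n` (supported on permutations `σ`, with
`P(v = σ) = ∏_i w (σ i) / (ℓ_n − ∑_{k<i} w (σ k))`). -/
def sbMeasure (n : ℕ) (wn : Fin n → ℝ) : Measure (Fin n → Fin n) :=
  Measure.sum fun σ : Equiv.Perm (Fin n) =>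
    ENNReal.ofReal (∏ i : Fin n,
        wn (σ i) / ((∑ k, wn k) - ∑ k ∈ Finset.univ.filter fun k => k < i, wn (σ k))) •
      Measure.dirac ⇑σ

/-- The joint law of (edge indicators of `G(W,p)`, size-biased order), the two being
independent. -/
def expMeasure' (n : ℕ) (wn : Fin n → ℝ) (p : ℝ) :
    Measure ((Fin n → Fin n → Bool) × (Fin n → Fin n)) :=
  Measure.sum fun σ : Equiv.Perm (Fin n) =>
    ENNReal.ofReal (∏ i : Fin n,
        wn (σ i) / ((∑ k, wn k) - ∑ k ∈ Finset.univ.filter fun k => k < i, wn (σ k))) •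
      (graphMeasure n wn p).map fun g => (g, ⇑σ)

/-- `sbW wn vord k` is `w_{v(k)}` (1-based), with the conventions `w_{v(0)} = 0` and
`w_{v(k)} = 0` for `k > n`. -/
def sbW {n : ℕ} (wn : Fin n → ℝ) (vord : Fin n → Fin n) (k : ℕ) : ℝ :=
  if h : k - 1 < n then (if k = 0 then 0 else wn (vord ⟨k - 1, h⟩)) else 0

/-- The (0-based) first position, in the order `vord`, of a vertex of the component `c`;
this governs the order in which components are discovered by the breadth-first walk. -/
def firstIdx {n : ℕ} (G : SimpleGraph (Fin n)) (vord : Fin n → Fin n)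
    (c : G.ConnectedComponent) : ℕ :=
  sInf {i : ℕ | ∃ h : i < n, G.connectedComponentMk (vord ⟨i, h⟩) = c}

/-- The number of vertices explored strictly before the exploration of the component `c`
starts: components are explored in the order of their first appearance in `vord`, and the
exploration of `c` occupies the steps `startT c + 1, …, startT c + csize c`. -/
def startT {n : ℕ} (G : SimpleGraph (Fin n)) (vord : Fin n → Fin n)
    (c : G.ConnectedComponent) : ℕ :=
  ∑ v : Fin n, if firstIdx G vord (G.connectedComponentMk v) < firstIdx G vord c then 1 else 0

/-- The state (explored vertices, queue of discovered-but-unexplored vertices) of the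
breadth-first walk after `i` steps; roots are chosen as the first undiscovered vertex in the
order `vord`, and children are queued in the order `vord`. -/
def bfwQueue {n : ℕ} (G : SimpleGraph (Fin n)) (vord : Fin n → Fin n) :
    ℕ → Finset (Fin n) × List (Fin n)
  | 0 => (∅, [])
  | i + 1 =>
    let s := bfwQueue G vord i
    let q : List (Fin n) :=
      if s.2.isEmpty then ((List.ofFn vord).filter fun v => decide (v ∉ s.1)).take 1 else s.2
    match q with
    | [] => (s.1, [])
    | v :: rest =>
      (insert v s.1,
        rest ++ (List.ofFn vord).filter fun u => decide (G.Adj v u ∧ u ∉ s.1 ∧ u ∉ q))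

/-- The reflected exploration process `L` of the breadth-first walk:
`L_0 = 1`, `L_{i+1} = max (L_i + c(i+1) - 1) 1`. -/
def Lproc {n : ℕ} (G : SimpleGraph (Fin n)) (vord : Fin n → Fin n) (i : ℕ) : ℕ :=
  max (bfwQueue G vord i).2.length 1

/-- `discNbrs G vord i` is the number of neighbours of `v(i+1)` (0-based: `vord i`) outside
`{v(1),…,v(i+1)}`, i.e. the increment `X⁰_{i+1} + 1` of the process `L⁰`. -/
def discNbrs {n : ℕ} (G : SimpleGraph (Fin n)) (vord : Fin n → Fin n) (i : ℕ) : ℕ :=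
  Nat.card {j : Fin n // (∃ h : i < n, G.Adj (vord ⟨i, h⟩) j) ∧
    ∀ k : ℕ, ∀ hk : k < n, k ≤ i → vord ⟨k, hk⟩ ≠ j}

/-- The process `L⁰`: `L⁰_0 = 1`, `L⁰_{i+1} = L⁰_i + X⁰_{i+1}` where
`X⁰_{i+1} = ∑_{j ∉ {v(1),…,v(i+1)}} Y(v(i+1), j) − 1`. -/
def L0 {n : ℕ} (G : SimpleGraph (Fin n)) (vord : Fin n → Fin n) (m : ℕ) : ℤ :=
  1 - (m : ℤ) + ∑ i ∈ Finset.range m, (discNbrs G vord i : ℤ)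

/-- The deterministic-drift process `L̃^h`, defined by
`L̃^h_m + m − 1 = ∑_{i=1}^m ∑_{k > i+h} (1 − exp (−w_{v(i)} w_{v(k)} p))`,
the inner sum being over positions `k ≤ n` in the size-biased order. -/
def Ltilde {n : ℕ} (wn : Fin n → ℝ) (p : ℝ) (vord : Fin n → Fin n) (h m : ℕ) : ℝ :=
  1 - (m : ℝ) + ∑ i ∈ Finset.range m,
    if hi : i < n then
      ∑ k : Fin n, if i + h < (k : ℕ) then
        1 - Real.exp (-(wn (vord ⟨i, hi⟩) * wn (vord k) * p)) else 0
    else 0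

/-- The law of the independent exponential clocks `(T_k)_{k ≤ n}`, `T_k` of rate `w_k / ℓ_n`. -/
def clocksMeasure (n : ℕ) (wn : Fin n → ℝ) : Measure (Fin n → ℝ) :=
  Measure.pi fun k => ProbabilityTheory.expMeasure (wn k / ∑ i, wn i)

/-- `N(x)`: the number of clocks that have rung by time `x`. -/
def Nclock {n : ℕ} (x : ℝ) (ω : Fin n → ℝ) : ℕ :=
  ∑ k : Fin n, if ω k ≤ x then 1 else 0

/-- `X(x)`: the total weight of the clocks that have rung by time `x`. -/
def Xclock {n : ℕ} (wn : Fin n → ℝ) (x : ℝ) (ω : Fin n → ℝ) : ℝ :=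
  ∑ k : Fin n, if ω k ≤ x then wn k else 0

/-- Conditions (C2) on a pair of sequences `(a, b)`, relative to the constant `Ā`. -/
structure Cond2 (w : ∀ n : ℕ, Fin n → ℝ) (Abar : ℝ) (a b : ℕ → ℝ) : Prop where
  exp_lt : ∀ᶠ n : ℕ in atTop,
    Real.exp (-(b n) ^ 2 / (Abar * (b n * (n : ℝ) ^ ((1 : ℝ) / 3) + a n))) < 1 / 4
  a_top : Tendsto a atTop atTop
  b_top : Tendsto b atTop atTop
  a_lito : a =o[atTop] fun n : ℕ => (n : ℝ)
  b_bigO : b =O[atTop] a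
  a_bigO : a =O[atTop] fun n => b n * ell w n ^ ((1 : ℝ) / 3)
  a_sq_bigO : (fun n => a n ^ 2) =O[atTop] fun n => b n * ell w n

/-- Conditions (C3) on a quadruple of sequences `(a, b, c, d)`. -/
structure Cond3 (w : ∀ n : ℕ, Fin n → ℝ) (Abar : ℝ) (a b c d : ℕ → ℝ) : Prop where
  sum_lito : (fun n => a n + c n) =o[atTop] fun n : ℕ => (n : ℝ)
  diff_top : Tendsto (fun n => a n - b n) atTop atTop
  d_bigO : d =O[atTop] fun n => a n - b n
  c2 : Cond2 w Abar (fun n => Real.sqrt ((a n - b n) * (a n + c n))) d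

/-- The list of component sizes, sorted in decreasing order. -/
def sizesList {n : ℕ} (G : SimpleGraph (Fin n)) : List ℕ :=
  (((comps G).val.map fun c => csize G c).sort (· ≤ ·)).reverse

/-- `kthSize G k` is the size of the `(k+1)`-st largest connected component of `G`
(`0` if there is no such component). -/
def kthSize {n : ℕ} (G : SimpleGraph (Fin n)) (k : ℕ) : ℕ := (sizesList G).getD k 0

end

/-- Path weight of a (partial) size-biased order. -/
noncomputable def pathZ {n : ℕ} (w : Fin n → ℝ) (m : ℕ) (f : Fin m → Fin n) : ℝ :=
  if Function.Injective f then
    ∏ i : Fin m, w (f i) / ((∑ k, w k) - ∑ k ∈ Finset.univ.filter fun k => k < i, w (f k))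
  else 0

lemma sum_inj_le {n m : ℕ} (w : Fin n → ℝ) (hw : ∀ i, 0 < w i) (f : Fin m → Fin n)
    (hf : Function.Injective f) (s : Finset (Fin m)) : ∑ k ∈ s, w (f k) ≤ ∑ k, w k := by
  have e : ∑ x ∈ s.image f, w x = ∑ k ∈ s, w (f k) :=
    Finset.sum_image (fun a _ b _ h => hf h)
  rw [← e]
  exact Finset.sum_le_sum_of_subset_of_nonneg (Finset.subset_univ _) (fun i _ _ => (hw i).le)

lemma pathZ_nonneg {n : ℕ} (w : Fin n → ℝ) (hw : ∀ i, 0 < w i) (m : ℕ) (f : Fin m → Fin n) :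
    0 ≤ pathZ w m f := by
  unfold pathZ
  split_ifs with h
  · refine Finset.prod_nonneg fun i _ => div_nonneg (hw _).le ?_
    exact sub_nonneg.2 (sum_inj_le w hw f h _)
  · exact le_rfl

lemma snoc_inj {n m : ℕ} (f : Fin m → Fin n) (a : Fin n) :
    Function.Injective (Fin.snoc f a : Fin (m+1) → Fin n) ↔
      Function.Injective f ∧ a ∉ Set.range f := by
  constructor
  · intro h
    refine ⟨fun x y hxy => ?_, ?_⟩
    · have := @h x.castSucc y.castSucc (by simpa using hxy)
      exact Fin.castSucc_injective _ this
    · rintro ⟨x, hx⟩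
      have := @h x.castSucc (Fin.last m) (by simpa using hx)
      exact absurd this (Fin.castSucc_lt_last x).ne
  · rintro ⟨h1, h2⟩ x y
    induction x using Fin.lastCases with
    | last =>
      induction y using Fin.lastCases with
      | last => simp
      | cast y => intro h; exact absurd ⟨y, by simpa using h.symm⟩ h2
    | cast x =>
      induction y using Fin.lastCases with
      | last => intro h; exact absurd ⟨x, by simpa using h⟩ h2
      | cast y => intro h; exact congrArg Fin.castSucc (@h1 x y (by simpa using h))

lemma sum_filter_snoc {n m : ℕ} (w : Fin n → ℝ) (f : Fin m → Fin n) (a : Fin n) (i : Fin m) :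
    ∑ k ∈ Finset.univ.filter (fun k => k < i.castSucc),
      w ((Fin.snoc f a : Fin (m+1) → Fin n) k) =
    ∑ k ∈ Finset.univ.filter (fun k => k < i), w (f k) := by
  rw [Finset.sum_filter, Finset.sum_filter, Fin.sum_univ_castSucc]
  simp [(Fin.castSucc_lt_last i).le]

lemma sum_filter_snoc_last {n m : ℕ} (w : Fin n → ℝ) (f : Fin m → Fin n) (a : Fin n) :
    ∑ k ∈ Finset.univ.filter (fun k => k < Fin.last m),
      w ((Fin.snoc f a : Fin (m+1) → Fin n) k) = ∑ k, w (f k) := by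
  rw [Finset.sum_filter, Fin.sum_univ_castSucc]
  simp [Fin.castSucc_lt_last]

lemma pathZ_snoc {n m : ℕ} (w : Fin n → ℝ) (f : Fin m → Fin n) (a : Fin n) :
    pathZ w (m+1) (Fin.snoc f a) =
      pathZ w m f * (if a ∈ Set.range f then 0 else w a / ((∑ k, w k) - ∑ k, w (f k))) := by
  unfold pathZ
  simp only [snoc_inj]
  by_cases h : Function.Injective f <;> by_cases h2 : a ∈ Set.range f
  · simp only [h, h2]; simp
  · simp only [h, h2, not_false_eq_true, and_true, if_true, if_false]
    rw [Fin.prod_univ_castSucc, sum_filter_snoc_last]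
    simp only [sum_filter_snoc, Fin.snoc_castSucc, Fin.snoc_last]
  · simp [h]
  · simp [h]

/-- Partial expectation. -/
noncomputable def pathE {n : ℕ} (w : Fin n → ℝ) (m : ℕ) (G : (Fin m → Fin n) → ℝ) : ℝ :=
  ∑ f, pathZ w m f * G f

lemma sum_off {n m : ℕ} (g : Fin n → ℝ) (f : Fin m → Fin n) (hf : Function.Injective f) :
    ∑ a, (if a ∈ Set.range f then 0 else g a) = ∑ a, g a - ∑ k, g (f k) := by
  have h1 : ∑ k, g (f k) = ∑ a, (if a ∈ Set.range f then g a else 0) := by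
    refine Fintype.sum_of_injective f hf _ _ ?_ ?_
    · intro i hi; simp only [hi, if_false]
    · intro i; simp
  rw [h1, ← Finset.sum_sub_distrib]
  refine Finset.sum_congr rfl fun a _ => ?_
  split_ifs <;> simp

lemma pathE_succ {n m : ℕ} (w : Fin n → ℝ) (G : (Fin m → Fin n) → ℝ) (h : Fin n → ℝ) :
    pathE w (m+1) (fun f => G (fun k => f k.castSucc) * h (f (Fin.last m))) =
    pathE w m (fun f => G f * ((∑ a, w a * h a - ∑ k, w (f k) * h (f k)) /
        ((∑ k, w k) - ∑ k, w (f k)))) := by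
  unfold pathE
  rw [← (Fin.snocEquiv (fun _ : Fin (m+1) => Fin n)).sum_comp, Fintype.sum_prod_type,
    Finset.sum_comm]
  refine Finset.sum_congr rfl fun f _ => ?_
  simp only [Fin.snocEquiv, Equiv.coe_fn_mk, Fin.snoc_castSucc, Fin.snoc_last, pathZ_snoc]
  by_cases hf : Function.Injective f
  · rw [← sum_off (fun a => w a * h a) f hf, Finset.sum_div, Finset.mul_sum, Finset.mul_sum]
    refine Finset.sum_congr rfl fun a _ => ?_
    split_ifs
    · simp
    · ring
  · simp [pathZ, hf]

lemma D_pos {n m : ℕ} (hm : m < n) (w : Fin n → ℝ) (hw : ∀ i, 0 < w i) (f : Fin m → Fin n)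
    (hf : Function.Injective f) : 0 < (∑ k, w k) - ∑ k, w (f k) := by
  rw [← sum_off w f hf]
  have : ∃ a, a ∉ Set.range f := by
    by_contra hcon
    push Not at hcon
    have := Fintype.card_le_of_surjective f (fun a => hcon a)
    simp at this
    omega
  obtain ⟨a, ha⟩ := this
  refine Finset.sum_pos' (fun i _ => ?_) ⟨a, Finset.mem_univ _, ?_⟩
  · split_ifs
    · exact le_rfl
    · exact (hw i).le
  · simp only [ha, if_false]; exact hw a

lemma pathE_init {n m : ℕ} (hm : m < n) (w : Fin n → ℝ) (hw : ∀ i, 0 < w i)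
    (G : (Fin m → Fin n) → ℝ) :
    pathE w (m+1) (fun f => G (fun k => f k.castSucc)) = pathE w m G := by
  have := pathE_succ w G (fun _ => 1)
  simp only [mul_one] at this
  rw [this]
  unfold pathE
  refine Finset.sum_congr rfl fun f _ => ?_
  by_cases hf : Function.Injective f
  · beta_reduce
    rw [div_self (D_pos hm w hw f hf).ne', mul_one]
  · simp [pathZ, hf]

lemma pathE_marg {n m : ℕ} (w : Fin n → ℝ) (hw : ∀ i, 0 < w i)
    (G : (Fin m → Fin n) → ℝ) (N : ℕ) (hN : m ≤ N) (hNn : N ≤ n) :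
    pathE w N (fun f => G (fun k => f (Fin.castLE hN k))) = pathE w m G := by
  induction N, hN using Nat.le_induction with
  | base => rfl
  | succ N hN ih =>
    rw [← ih (by omega), ← pathE_init (m := N) (by omega) w hw]
    rfl

lemma pathE_one {n m : ℕ} (w : Fin n → ℝ) (hw : ∀ i, 0 < w i) (hm : m ≤ n) :
    pathE w m (fun _ => 1) = 1 := by
  rw [pathE_marg (m := 0) w hw (fun _ => 1) m (by omega) hm]
  simp [pathE, pathZ, Function.injective_of_subsingleton]

lemma pathE_mono {n m : ℕ} (w : Fin n → ℝ) (hw : ∀ i, 0 < w i) (G H : (Fin m → Fin n) → ℝ)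
    (h : ∀ f, Function.Injective f → G f ≤ H f) : pathE w m G ≤ pathE w m H := by
  refine Finset.sum_le_sum fun f _ => ?_
  by_cases hf : Function.Injective f
  · exact mul_le_mul_of_nonneg_left (h f hf) (pathZ_nonneg w hw m f)
  · simp [pathZ, hf]

lemma pathE_mul_const {n m : ℕ} (w : Fin n → ℝ) (G : (Fin m → Fin n) → ℝ) (c : ℝ) :
    pathE w m (fun f => G f * c) = pathE w m G * c := by
  simp only [pathE, Finset.sum_mul, mul_assoc]

lemma integral_sb {n : ℕ} (w : Fin n → ℝ) (hw : ∀ i, 0 < w i) (F : (Fin n → Fin n) → ℝ) :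
    ∫ ω, F ω ∂sbMeasure n w = pathE w n F := by
  unfold sbMeasure
  rw [Measure.sum_fintype, integral_finsetSum_measure]
  · unfold pathE
    refine Fintype.sum_of_injective (fun σ : Equiv.Perm (Fin n) => (σ : Fin n → Fin n))
      DFunLike.coe_injective _ _ ?_ ?_
    · intro f hf
      have : ¬ Function.Injective f := fun h =>
        hf ⟨Equiv.ofBijective f (Finite.injective_iff_bijective.1 h), rfl⟩
      simp [pathZ, this]
    · intro σ
      rw [integral_smul_measure, integral_dirac]
      have h0 := pathZ_nonneg w hw n σ
      have h1 : pathZ w n σ = ∏ i : Fin n,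
        w (σ i) / ((∑ k, w k) - ∑ k ∈ Finset.univ.filter fun k => k < i, w (σ k)) := by
        simp only [pathZ, σ.injective, if_true]
      rw [← h1, ENNReal.toReal_ofReal h0, smul_eq_mul]
  · intro σ _
    exact (Integrable.of_finite).smul_measure ENNReal.ofReal_ne_top

lemma pathE_pair {n : ℕ} (w : Fin n → ℝ) (hw : ∀ i, 0 < w i) (a b : ℕ) (hab : a < b)
    (hb : b < n) (lo hi : ℝ) (hlo : 0 ≤ lo) (hhi : 0 ≤ hi)
    (hR : ∀ m ≤ b, ∀ f : Fin m → Fin n, Function.Injective f →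
      lo ≤ (∑ x, w x * w x - ∑ k, w (f k) * w (f k)) / ((∑ k, w k) - ∑ k, w (f k)) ∧
      (∑ x, w x * w x - ∑ k, w (f k) * w (f k)) / ((∑ k, w k) - ∑ k, w (f k)) ≤ hi) :
    lo * lo ≤ pathE w n (fun f => w (f ⟨a, by omega⟩) * w (f ⟨b, hb⟩)) ∧
    pathE w n (fun f => w (f ⟨a, by omega⟩) * w (f ⟨b, hb⟩)) ≤ hi * hi := by
  have e1 : pathE w n (fun f => w (f ⟨a, by omega⟩) * w (f ⟨b, hb⟩)) =
      pathE w (b+1) (fun f => w (f (Fin.castSucc ⟨a, hab⟩)) * w (f (Fin.last b))) :=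
    pathE_marg w hw (fun f : Fin (b+1) → Fin n =>
      w (f (Fin.castSucc ⟨a, hab⟩)) * w (f (Fin.last b))) n (by omega) le_rfl
  have e2 := pathE_succ w (fun f : Fin b → Fin n => w (f ⟨a, hab⟩)) w
  have e3 : pathE w b (fun f => w (f ⟨a, hab⟩)) =
      pathE w (a+1) (fun f => 1 * w (f (Fin.last a))) := by
    have := pathE_marg w hw (fun f : Fin (a+1) → Fin n => 1 * w (f (Fin.last a))) b
      (by omega) (by omega)
    rw [← this]
    simp only [one_mul]
    rfl
  have e4 := pathE_succ w (fun f : Fin a → Fin n => (1:ℝ)) w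
  have e5 := pathE_one (m := a) w hw (by omega)
  rw [e1, e2]
  rw [e4] at e3
  have l1 : lo ≤ pathE w b (fun f => w (f ⟨a, hab⟩)) := by
    rw [e3]
    calc lo = pathE w a (fun _ => 1 * lo) := by
          rw [pathE_mul_const w (fun _ => 1) lo, e5, one_mul]
      _ ≤ _ := pathE_mono w hw _ _ fun f hf => by
          rw [one_mul, one_mul]; exact (hR a hab.le f hf).1
  have u1 : pathE w b (fun f => w (f ⟨a, hab⟩)) ≤ hi := by
    rw [e3]
    calc _ ≤ pathE w a (fun _ => 1 * hi) := pathE_mono w hw _ _ fun f hf => by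
          rw [one_mul, one_mul]; exact (hR a hab.le f hf).2
      _ = hi := by rw [pathE_mul_const w (fun _ => 1) hi, e5, one_mul]
  constructor
  · calc lo * lo ≤ pathE w b (fun f => w (f ⟨a, hab⟩)) * lo :=
          mul_le_mul_of_nonneg_right l1 hlo
      _ = pathE w b (fun f => w (f ⟨a, hab⟩) * lo) := (pathE_mul_const w _ _).symm
      _ ≤ _ := pathE_mono w hw _ _ fun f hf =>
          mul_le_mul_of_nonneg_left (hR b le_rfl f hf).1 (hw _).le
  · calc _ ≤ pathE w b (fun f => w (f ⟨a, hab⟩) * hi) := pathE_mono w hw _ _ fun f hf =>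
          mul_le_mul_of_nonneg_left (hR b le_rfl f hf).2 (hw _).le
      _ = pathE w b (fun f => w (f ⟨a, hab⟩)) * hi := pathE_mul_const w _ _
      _ ≤ hi * hi := mul_le_mul_of_nonneg_right u1 hhi

lemma mean_pos (w : ∀ n : ℕ, Fin n → ℝ) (μ : Measure ℝ) (hC : CondC w μ) :
    0 < ∫ x, x ∂μ := by
  have := hC.isProb
  have hint : Integrable (fun x : ℝ => x) μ := by
    refine ((integrable_const (1:ℝ)).add hC.int3).mono' measurable_id.aestronglyMeasurable ?_
    filter_upwards [hC.pos] with x hx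
    simp only [Real.norm_eq_abs, abs_of_pos hx, Pi.add_apply]
    nlinarith [mul_nonneg hx.le (sq_nonneg (x-1)), sq_nonneg (x-1)]
  rw [integral_pos_iff_support_of_nonneg_ae (hC.pos.mono fun x hx => hx.le) hint]
  have : Function.support (fun x : ℝ => x) =ᵐ[μ] Set.univ := by
    filter_upwards [hC.pos] with x hx
    exact propext ⟨fun _ => trivial, fun _ => hx.ne'⟩
  rw [measure_congr this]
  simp

lemma rpow_little (g : ℕ → ℝ) (h : g =o[atTop] fun n : ℕ => (n : ℝ) ^ ((2 : ℝ) / 3)) :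
    g =o[atTop] fun n : ℕ => (n : ℝ) := by
  refine h.trans_isBigO (IsBigO.of_bound 1 ?_)
  filter_upwards [eventually_ge_atTop 1] with n hn
  have h1 : (1:ℝ) ≤ n := by exact_mod_cast hn
  rw [one_mul, Real.norm_of_nonneg (by positivity), Real.norm_of_nonneg (by positivity)]
  calc (n:ℝ) ^ ((2 : ℝ) / 3) ≤ (n:ℝ) ^ (1:ℝ) :=
        Real.rpow_le_rpow_of_exponent_le h1 (by norm_num)
    _ = n := Real.rpow_one _

lemma ratio_bound (w : ∀ n : ℕ, Fin n → ℝ) (μ : Measure ℝ) (hC : CondC w μ)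
    (l : ℕ → ℕ) (hl : (fun n => (l n : ℝ)) =o[atTop] fun n : ℕ => (n : ℝ))
    (ε : ℝ) (hε : 0 < ε) (hε1 : ε ≤ 1) :
    ∀ᶠ n : ℕ in atTop, ∀ m ≤ l n, ∀ f : Fin m → Fin n, Function.Injective f →
      1 - ε ≤ (∑ x, w n x * w n x - ∑ k, w n (f k) * w n (f k)) /
        ((∑ k, w n k) - ∑ k, w n (f k)) ∧
      (∑ x, w n x * w n x - ∑ k, w n (f k) * w n (f k)) /
        ((∑ k, w n k) - ∑ k, w n (f k)) ≤ 1 + ε := by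
  have hE := mean_pos w μ hC
  have h2 := hC.sq_asymp
  rw [hC.moment_eq] at h2
  have h1 := hC.ell_asymp
  set E := ∫ x, x ∂μ with hEdef
  set δ := E * ε / 8 with hδ
  have hδ0 : 0 < δ := by positivity
  set C := |∫ x, x ^ 3 ∂μ| + 1 with hCdef
  have hC0 : 0 < C := by positivity
  set K := 4 * C / δ with hK
  have hK0 : 0 < K := by positivity
  have b1 := (rpow_little _ h1).bound hδ0
  have b2 := (rpow_little _ h2).bound hδ0
  have b3 := hC.cube_asymp.bound one_pos
  have b4 := hl.bound (show 0 < δ / (4 * (K^2 + 1)) by positivity)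
  filter_upwards [b1, b2, b3, b4, eventually_ge_atTop 1] with n b1 b2 b3 b4 hn m hm f hf
  have hn1 : (1:ℝ) ≤ n := by exact_mod_cast hn
  simp only [Real.norm_eq_abs, Nat.abs_cast, ell, abs_one, mul_one] at b1 b2 b3 b4
  have hS3 : ∑ x, w n x ^ 3 ≤ C * n := by
    have := (abs_le.1 b3).2
    have h5 : (∫ x, x ^ 3 ∂μ) * (n:ℝ) ≤ |∫ x, x ^ 3 ∂μ| * n :=
      mul_le_mul_of_nonneg_right (le_abs_self _) (by positivity)
    rw [hCdef]; nlinarith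
  have hw := hC.w_pos n
  have hQ0 : 0 ≤ ∑ k, w n (f k) * w n (f k) :=
    Finset.sum_nonneg fun k _ => mul_self_nonneg _
  have hP0 : 0 ≤ ∑ k, w n (f k) := Finset.sum_nonneg fun k _ => (hw _).le
  have hml : (m:ℝ) ≤ l n := by exact_mod_cast hm
  have hlK : (l n : ℝ) * (K^2 + 1) ≤ δ / 4 * n := by
    have : δ / (4 * (K^2 + 1)) * n * (K^2+1) = δ / 4 * n := by field_simp
    rw [← this]
    exact mul_le_mul_of_nonneg_right b4 (by positivity)
  have hQ : ∑ k, w n (f k) * w n (f k) ≤ m * K^2 + δ / 4 * n := by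
    have s1 : ∑ k, w n (f k) * w n (f k) ≤ ∑ k : Fin m, (K^2 + w n (f k) ^ 3 / K) := by
      refine Finset.sum_le_sum fun k _ => ?_
      have hx := hw (f k)
      set x := w n (f k)
      rcases le_total x K with h | h
      · have : 0 ≤ x^3 / K := by positivity
        nlinarith
      · have : x * x ≤ x^3 / K := by
          rw [le_div_iff₀ hK0]
          nlinarith [mul_nonneg hx.le hx.le]
        nlinarith [sq_nonneg K]
    have s2 : ∑ k, w n (f k) ^ 3 ≤ ∑ x, w n x ^ 3 :=
      sum_inj_le (fun x => w n x ^ 3) (fun i => pow_pos (hw i) 3) f hf Finset.univ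
    rw [Finset.sum_add_distrib, ← Finset.sum_div] at s1
    simp only [Finset.sum_const, Finset.card_univ, Fintype.card_fin, nsmul_eq_mul] at s1
    have s3 : (∑ k, w n (f k) ^ 3) / K ≤ δ / 4 * n := by
      rw [div_le_iff₀ hK0]
      have : δ / 4 * n * K = C * n := by rw [hK]; field_simp
      rw [this]; linarith
    linarith
  have hP : ∑ k, w n (f k) ≤ m + ∑ k, w n (f k) * w n (f k) := by
    have : ∑ k, w n (f k) ≤ ∑ k : Fin m, (1 + w n (f k) * w n (f k)) :=
      Finset.sum_le_sum fun k _ => by nlinarith [sq_nonneg (w n (f k) - 1)]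
    rw [Finset.sum_add_distrib] at this
    simpa using this
  have hsq : ∑ x, w n x ^ 2 = ∑ x, w n x * w n x := by simp only [sq]
  rw [hsq] at b2
  have hmK : (m:ℝ) * K^2 + m ≤ δ / 4 * n := by
    have : (m:ℝ) * (K^2 + 1) ≤ l n * (K^2 + 1) :=
      mul_le_mul_of_nonneg_right hml (by positivity)
    linarith
  have hm0 : (0:ℝ) ≤ m := by positivity
  have hmK0 : 0 ≤ (m:ℝ) * K^2 := by positivity
  have hnδ : 0 < δ * n := by positivity
  rw [abs_le] at b1 b2
  set P := ∑ k, w n (f k)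
  set Q := ∑ k, w n (f k) * w n (f k)
  set L := ∑ k, w n k
  set S := ∑ x, w n x * w n x
  have hP' : P ≤ δ * n := by linarith
  have hQ' : Q ≤ δ * n := by linarith
  have hEn : E * n * ε = 8 * (δ * n) := by rw [hδ]; ring
  have hEn0 : 0 < E * n := by positivity
  have hδE : 8 * (δ * n) ≤ E * n := by rw [← hEn]; exact mul_le_of_le_one_right hEn0.le hε1
  have hD : 0 < L - P := by linarith
  have hεD : 4 * (δ * n) ≤ ε * (L - P) := by
    have : ε * (E * n / 2) ≤ ε * (L - P) := mul_le_mul_of_nonneg_left (by linarith) hε.le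
    linarith
  constructor
  · rw [le_div_iff₀ hD]; linarith
  · rw [div_le_iff₀ hD]; linarith

/-- Lemma of the paper: `E[w_{v(i)} w_{v(l)}] = 1 + o(1)` for
`0 < i < l = o(n)`. -/
theorem mean_product_size_biased_weights
    (w : ∀ n : ℕ, Fin n → ℝ) (μ : Measure ℝ) (hC : CondC w μ)
    (i l : ℕ → ℕ) (hi0 : ∀ n, 0 < i n) (hil : ∀ n, i n < l n)
    (hl : (fun n => (l n : ℝ)) =o[atTop] fun n : ℕ => (n : ℝ)) :
    (fun n => (∫ ω, sbW (w n) ω (i n) * sbW (w n) ω (l n) ∂sbMeasure n (w n)) - 1) =o[atTop]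
      fun _ : ℕ => (1 : ℝ) := by
  rw [isLittleO_one_iff, Metric.tendsto_nhds]
  intro η hη
  set ε := min 1 (η / 4) with hε
  have hε0 : 0 < ε := by positivity
  have hε1 : ε ≤ 1 := min_le_left _ _
  have hε2 : ε ≤ η / 4 := min_le_right _ _
  filter_upwards [ratio_bound w μ hC l hl ε hε0 hε1, hl.bound (one_half_pos (α := ℝ)),
    eventually_ge_atTop 1] with n hR hb hn
  have hn1 : (1:ℝ) ≤ n := by exact_mod_cast hn
  simp only [Real.norm_eq_abs, Nat.abs_cast] at hb
  have hln : l n < n := by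
    have : (l n : ℝ) < n := by linarith
    exact_mod_cast this
  have h1 := hi0 n
  have h2 := hil n
  have hp := pathE_pair (w n) (hC.w_pos n) (i n - 1) (l n - 1) (by omega) (by omega)
    (1 - ε) (1 + ε) (by linarith) (by linarith) (fun m hm f hf => hR m (by omega) f hf)
  rw [integral_sb (w n) (hC.w_pos n)]
  have e : (fun ω : Fin n → Fin n => sbW (w n) ω (i n) * sbW (w n) ω (l n)) =
      fun f => w n (f ⟨i n - 1, by omega⟩) * w n (f ⟨l n - 1, by omega⟩) := by
    funext f
    unfold sbW
    rw [dif_pos (by omega), dif_pos (by omega), if_neg (by omega), if_neg (by omega)]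
  rw [e, Real.dist_eq, sub_zero, abs_lt]
  constructor <;> nlinarith [hp.1, hp.2]
end

section
/- Assume Conditions (C). There exists a constant A > 0 such that whenever the pair of sequences (x_n, y) verifies Conditions (C2), one has P(|X(x_n) − Σ_{k=1}^{N(x_n)} E[w_{v(k)}]| ≥ y) ≤ A·exp(−y²/(A(y·n^{1/3} + x_n))). -/
open MeasureTheory Filter Asymptotics
open scoped Classical ENNReal Topology

/-! ### Expectations under a product Bernoulli law on subsets -/

section ProductExpectation

variable {ι : Type*} [Fintype ι] [DecidableEq ι]

/-- Expectation of `f` of the random subset containing each `j` independently w.p. `p j`. -/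
noncomputable def PE (p : ι → ℝ) (f : Finset ι → ℝ) : ℝ :=
  ∑ S : Finset ι, ((∏ j ∈ S, p j) * ∏ j ∈ Sᶜ, (1 - p j)) * f S

theorem PE_mono {p : ι → ℝ} (h0 : ∀ j, 0 ≤ p j) (h1 : ∀ j, p j ≤ 1) {f g : Finset ι → ℝ}
    (h : ∀ S, f S ≤ g S) : PE p f ≤ PE p g := by
  unfold PE
  refine Finset.sum_le_sum fun S _ => mul_le_mul_of_nonneg_left (h S) ?_
  exact mul_nonneg (Finset.prod_nonneg fun j _ => h0 j)
    (Finset.prod_nonneg fun j _ => sub_nonneg.2 (h1 j))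

theorem PE_add (p : ι → ℝ) (f g : Finset ι → ℝ) :
    PE p (fun S => f S + g S) = PE p f + PE p g := by
  simp [PE, mul_add, Finset.sum_add_distrib]

theorem PE_sub (p : ι → ℝ) (f g : Finset ι → ℝ) :
    PE p (fun S => f S - g S) = PE p f - PE p g := by
  simp [PE, mul_sub, Finset.sum_sub_distrib]

theorem PE_smul (p : ι → ℝ) (c : ℝ) (f : Finset ι → ℝ) :
    PE p (fun S => c * f S) = c * PE p f := by
  simp only [PE, Finset.mul_sum]
  exact Finset.sum_congr rfl fun S _ => by ring

theorem PE_prod (p b : ι → ℝ) :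
    PE p (fun S => ∏ j ∈ S, b j) = ∏ j, (p j * b j + (1 - p j)) := by
  rw [Fintype.prod_add]
  unfold PE
  refine Finset.sum_congr rfl fun S _ => ?_
  rw [Finset.prod_mul_distrib]; ring

theorem PE_const (p : ι → ℝ) (c : ℝ) : PE p (fun _ => c) = c := by
  have h := PE_prod p (fun _ => 1)
  have h2 := PE_smul p c (fun _ => 1)
  simp at h h2
  rw [h2, h, mul_one]

theorem PE_mem (p : ι → ℝ) (i : ι) : PE p (fun S => if i ∈ S then 1 else 0) = p i := by
  have h := PE_prod p (fun j => if j = i then 0 else 1)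
  have h2 : ∀ S : Finset ι, (∏ j ∈ S, if j = i then (0:ℝ) else 1) = 1 - if i ∈ S then 1 else 0 := by
    intro S
    by_cases hi : i ∈ S
    · simp only [hi, if_true, sub_self]
      exact Finset.prod_eq_zero hi (by simp)
    · simp only [hi, if_false, sub_zero]
      exact Finset.prod_eq_one fun j hj => by
        rw [if_neg]; rintro rfl; exact hi hj
  simp only [h2, PE_sub, PE_const] at h
  have h3 : (∏ j, (p j * (if j = i then (0:ℝ) else 1) + (1 - p j))) = 1 - p i := by
    rw [Finset.prod_eq_single i]
    · simp
    · intro j _ hj; simp [hj]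
    · simp
  linarith

theorem PE_sum {κ : Type*} (s : Finset κ) (p : ι → ℝ) (f : κ → Finset ι → ℝ) :
    PE p (fun S => ∑ k ∈ s, f k S) = ∑ k ∈ s, PE p (f k) := by
  simp only [PE, Finset.mul_sum]
  exact Finset.sum_comm

theorem PE_linear (p a : ι → ℝ) : PE p (fun S => ∑ j ∈ S, a j) = ∑ j, p j * a j := by
  have : (fun S : Finset ι => ∑ j ∈ S, a j) =
      fun S => ∑ j, a j * (if j ∈ S then 1 else 0) := by
    funext S; simp
  rw [this, PE_sum]
  refine Finset.sum_congr rfl fun j _ => ?_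
  rw [PE_smul, PE_mem, mul_comm]

theorem PE_mgf {p : ι → ℝ} (h0 : ∀ j, 0 ≤ p j) (h1 : ∀ j, p j ≤ 1) (a : ι → ℝ) (θ V : ℝ)
    (hθ : ∀ j, |θ * a j| ≤ 1) (hV : ∑ j, p j * a j ^ 2 ≤ V) :
    PE p (fun S => Real.exp (θ * (∑ j ∈ S, a j - ∑ j, p j * a j))) ≤ Real.exp (θ ^ 2 * V) := by
  have e1 : (fun S : Finset ι => Real.exp (θ * (∑ j ∈ S, a j - ∑ j, p j * a j))) =
      fun S => Real.exp (-(θ * ∑ j, p j * a j)) * ∏ j ∈ S, Real.exp (θ * a j) := by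
    funext S
    rw [← Real.exp_sum, ← Real.exp_add, ← Finset.mul_sum]
    congr 1; ring
  rw [e1, PE_smul, PE_prod]
  have e2 : ∏ j, (p j * Real.exp (θ * a j) + (1 - p j)) ≤
      ∏ j, Real.exp (p j * (θ * a j) + p j * (θ * a j) ^ 2) := by
    refine Finset.prod_le_prod (fun j _ => ?_) (fun j _ => ?_)
    · have := mul_nonneg (h0 j) (Real.exp_pos (θ * a j)).le
      linarith [h1 j]
    · have hb := (abs_le.1 (Real.abs_exp_sub_one_sub_id_le (hθ j))).2
      have := mul_le_mul_of_nonneg_left hb (h0 j)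
      have h3 := Real.add_one_le_exp (p j * (θ * a j) + p j * (θ * a j) ^ 2)
      linarith
  refine (mul_le_mul_of_nonneg_left e2 (Real.exp_pos _).le).trans ?_
  rw [← Real.exp_sum, ← Real.exp_add]
  apply Real.exp_le_exp.2
  have e3 : ∑ j, (p j * (θ * a j) + p j * (θ * a j) ^ 2) =
      θ * ∑ j, p j * a j + θ ^ 2 * ∑ j, p j * a j ^ 2 := by
    rw [Finset.mul_sum, Finset.mul_sum, ← Finset.sum_add_distrib]
    exact Finset.sum_congr rfl fun j _ => by ring
  rw [e3]
  have := mul_le_mul_of_nonneg_left hV (sq_nonneg θ)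
  linarith

theorem PE_two_sided {p : ι → ℝ} (h0 : ∀ j, 0 ≤ p j) (h1 : ∀ j, p j ≤ 1) (a : ι → ℝ) (θ V : ℝ)
    (hθ : ∀ j, |θ * a j| ≤ 1) (hV : ∑ j, p j * a j ^ 2 ≤ V) :
    PE p (fun S => Real.exp (θ * |∑ j ∈ S, a j - ∑ j, p j * a j|)) ≤
      2 * Real.exp (θ ^ 2 * V) := by
  have hA := PE_mgf h0 h1 a θ V hθ hV
  have hB := PE_mgf h0 h1 a (-θ) V (by simpa using hθ) hV
  have : PE p (fun S => Real.exp (θ * |∑ j ∈ S, a j - ∑ j, p j * a j|)) ≤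
      PE p (fun S => Real.exp (θ * (∑ j ∈ S, a j - ∑ j, p j * a j)) +
        Real.exp (-θ * (∑ j ∈ S, a j - ∑ j, p j * a j))) := by
    refine PE_mono h0 h1 fun S => ?_
    rcases abs_cases (∑ j ∈ S, a j - ∑ j, p j * a j) with ⟨h, _⟩ | ⟨h, _⟩
    · rw [h]; linarith [Real.exp_pos (-θ * (∑ j ∈ S, a j - ∑ j, p j * a j))]
    · rw [h, mul_neg, ← neg_mul]
      linarith [Real.exp_pos (θ * (∑ j ∈ S, a j - ∑ j, p j * a j))]
  rw [PE_add] at this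
  rw [neg_sq] at hB
  linarith

theorem PE_abs {p : ι → ℝ} (h0 : ∀ j, 0 ≤ p j) (h1 : ∀ j, p j ≤ 1) (a : ι → ℝ) (θ V : ℝ)
    (hpos : 0 < θ)
    (hθ : ∀ j, |θ * a j| ≤ 1) (hV : ∑ j, p j * a j ^ 2 ≤ V) :
    PE p (fun S => |∑ j ∈ S, a j - ∑ j, p j * a j|) ≤
      2 / θ * Real.exp (θ ^ 2 * V) := by
  have hA := PE_two_sided h0 h1 a θ V hθ hV
  have : PE p (fun S => θ * |∑ j ∈ S, a j - ∑ j, p j * a j|) ≤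
      PE p (fun S => Real.exp (θ * |∑ j ∈ S, a j - ∑ j, p j * a j|)) := by
    refine PE_mono h0 h1 fun S => ?_
    linarith [Real.add_one_le_exp (θ * |∑ j ∈ S, a j - ∑ j, p j * a j|)]
  rw [PE_smul] at this
  rw [div_mul_eq_mul_div, le_div_iff₀ hpos]
  linarith

/-- Bernstein-type tail bound. -/
theorem PE_tail {p : ι → ℝ} (h0 : ∀ j, 0 ≤ p j) (h1 : ∀ j, p j ≤ 1) (a : ι → ℝ) (B V t : ℝ)
    (hB : 0 < B) (hVpos : 0 < V) (ht : 0 < t) (ha : ∀ j, |a j| ≤ B)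
    (hV : ∑ j, p j * a j ^ 2 ≤ V) :
    PE p (fun S => if t ≤ |∑ j ∈ S, a j - ∑ j, p j * a j| then 1 else 0) ≤
      2 * Real.exp (-(t ^ 2 / (2 * (2 * V + B * t)))) := by
  have hd : 0 < 2 * V + B * t := by positivity
  set θ := t / (2 * V + B * t) with hθdef
  have hθ0 : 0 < θ := by positivity
  have hθ : ∀ j, |θ * a j| ≤ 1 := by
    intro j
    rw [abs_mul, abs_of_pos hθ0]
    calc θ * |a j| ≤ θ * B := mul_le_mul_of_nonneg_left (ha j) hθ0.le
      _ ≤ 1 := by rw [hθdef, div_mul_eq_mul_div, div_le_one hd]; nlinarith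
  have hA := PE_two_sided h0 h1 a θ V hθ hV
  have : PE p (fun S => if t ≤ |∑ j ∈ S, a j - ∑ j, p j * a j| then 1 else 0) ≤
      PE p (fun S => Real.exp (-(θ * t)) *
        Real.exp (θ * |∑ j ∈ S, a j - ∑ j, p j * a j|)) := by
    refine PE_mono h0 h1 fun S => ?_
    split_ifs with h
    · rw [← Real.exp_add]
      apply Real.one_le_exp
      nlinarith
    · positivity
  rw [PE_smul] at this
  refine this.trans ((mul_le_mul_of_nonneg_left hA (Real.exp_pos _).le).trans ?_)
  rw [mul_left_comm, ← Real.exp_add]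
  refine mul_le_mul_of_nonneg_left (Real.exp_le_exp.2 ?_) (by norm_num)
  have hθV : θ * V ≤ t / 2 := by
    rw [hθdef, div_mul_eq_mul_div, div_le_iff₀ hd]; nlinarith [mul_pos hB ht]
  have e : t ^ 2 / (2 * (2 * V + B * t)) = θ * t / 2 := by
    rw [hθdef]; field_simp
  rw [e]; nlinarith

theorem PE_hasDerivAt (lam : ι → ℝ) (f : Finset ι → ℝ) (s : ℝ) :
    HasDerivAt (fun s => PE (fun j => 1 - Real.exp (-(lam j * s))) f)
      (PE (fun j => 1 - Real.exp (-(lam j * s)))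
        (fun S => ∑ j ∈ Sᶜ, lam j * (f (insert j S) - f S))) s := by
  set p : ι → ℝ := fun j => 1 - Real.exp (-(lam j * s)) with hp
  have hq : ∀ j, HasDerivAt (fun s => Real.exp (-(lam j * s))) (-(lam j * Real.exp (-(lam j * s)))) s := by
    intro j
    have h := (((hasDerivAt_id s).const_mul (lam j)).neg).exp
    refine (h.congr_deriv ?_)
    simp; ring
  have hD : ∀ S : Finset ι, HasDerivAt
      (fun s => ((∏ j ∈ S, (1 - Real.exp (-(lam j * s)))) * ∏ j ∈ Sᶜ, (1 - (1 - Real.exp (-(lam j * s))))) * f S)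
      (((∑ i ∈ S, lam i * ((∏ j ∈ S.erase i, p j) * ∏ j ∈ (S.erase i)ᶜ, (1 - p j)))
        - (∑ i ∈ Sᶜ, lam i) * ((∏ j ∈ S, p j) * ∏ j ∈ Sᶜ, (1 - p j))) * f S) s := by
    intro S
    refine HasDerivAt.mul_const ?_ _
    have h1 := HasDerivAt.fun_finsetProd (u := S) (f := fun j s => 1 - Real.exp (-(lam j * s)))
      (x := s) (fun j _ => (hq j).const_sub 1)
    have h2 := HasDerivAt.fun_finsetProd (u := Sᶜ) (f := fun j s => 1 - (1 - Real.exp (-(lam j * s))))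
      (x := s) (fun j _ => ((hq j).const_sub 1).const_sub 1)
    refine (h1.mul h2).congr_deriv ?_
    rw [sub_eq_add_neg]
    congr 1
    · rw [Finset.sum_mul]
      refine Finset.sum_congr rfl fun i hi => ?_
      have : (S.erase i)ᶜ = insert i Sᶜ := by
        ext j; by_cases hj : j = i <;> simp [hj]
      rw [this, Finset.prod_insert (by simpa using hi)]
      simp only [hp, smul_eq_mul]; ring
    · rw [Finset.mul_sum, Finset.sum_mul, ← Finset.sum_neg_distrib]
      refine Finset.sum_congr rfl fun i hi => ?_
      rw [← Finset.mul_prod_erase _ _ hi]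
      simp only [hp, smul_eq_mul]; ring
  have hsum := HasDerivAt.fun_sum (u := (Finset.univ : Finset (Finset ι))) (fun S _ => hD S)
  refine hsum.congr_deriv ?_
  unfold PE
  set P : Finset ι → ℝ := fun S => (∏ j ∈ S, p j) * ∏ j ∈ Sᶜ, (1 - p j) with hP
  have key : ∑ S : Finset ι, ∑ i ∈ S, lam i * P (S.erase i) * f S =
      ∑ S : Finset ι, ∑ i ∈ Sᶜ, lam i * P S * f (insert i S) := by
    rw [Finset.sum_sigma', Finset.sum_sigma']
    refine Finset.sum_bij' (fun x _ => ⟨x.1.erase x.2, x.2⟩) (fun x _ => ⟨insert x.2 x.1, x.2⟩)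
      ?_ ?_ ?_ ?_ ?_
    · rintro ⟨S, i⟩ h; simp
    · rintro ⟨S, i⟩ h; simp
    · rintro ⟨S, i⟩ h
      simp at h
      simp [Finset.insert_erase h]
    · rintro ⟨S, i⟩ h
      simp at h
      simp [Finset.erase_insert h]
    · rintro ⟨S, i⟩ h
      simp at h
      simp [Finset.insert_erase h]
  have e1 : ∑ S : Finset ι, ((∑ i ∈ S, lam i * P (S.erase i)) - (∑ i ∈ Sᶜ, lam i) * P S) * f S
      = ∑ S : Finset ι, ∑ i ∈ S, lam i * P (S.erase i) * f S -
        ∑ S : Finset ι, ∑ i ∈ Sᶜ, lam i * P S * f S := by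
    rw [← Finset.sum_sub_distrib]
    refine Finset.sum_congr rfl fun S _ => ?_
    rw [sub_mul, Finset.sum_mul, Finset.sum_mul, Finset.sum_mul]
  have e2 : ∑ S : Finset ι, P S * ∑ j ∈ Sᶜ, lam j * (f (insert j S) - f S) =
      ∑ S : Finset ι, ∑ i ∈ Sᶜ, lam i * P S * f (insert i S) -
        ∑ S : Finset ι, ∑ i ∈ Sᶜ, lam i * P S * f S := by
    rw [← Finset.sum_sub_distrib]
    refine Finset.sum_congr rfl fun S _ => ?_
    rw [Finset.mul_sum, ← Finset.sum_sub_distrib]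
    exact Finset.sum_congr rfl fun j _ => by ring
  rw [e2, ← key]
  exact e1

theorem PE_zero (f : Finset ι → ℝ) : PE (fun _ : ι => (0 : ℝ)) f = f ∅ := by
  unfold PE
  rw [Finset.sum_eq_single ∅]
  · simp
  · intro S _ hS
    obtain ⟨j, hj⟩ := Finset.nonempty_iff_ne_empty.2 hS
    rw [Finset.prod_eq_zero hj rfl]; simp
  · simp

/-- Dynkin-type bounds. -/
theorem PE_dynkin_le (lam : ι → ℝ) (f : Finset ι → ℝ) (x κ : ℝ) (hx : 0 ≤ x)
    (h : ∀ s, 0 ≤ s → s ≤ x → PE (fun j => 1 - Real.exp (-(lam j * s)))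
        (fun S => ∑ j ∈ Sᶜ, lam j * (f (insert j S) - f S)) ≤ κ) :
    PE (fun j => 1 - Real.exp (-(lam j * x))) f ≤ f ∅ + κ * x := by
  have hd := PE_hasDerivAt lam f
  have := (convex_Icc (0:ℝ) x).image_sub_le_mul_sub_of_deriv_le
    (f := fun s => PE (fun j => 1 - Real.exp (-(lam j * s))) f) (C := κ)
    (fun s _ => (hd s).continuousAt.continuousWithinAt)
    (fun s _ => (hd s).differentiableAt.differentiableWithinAt)
    (fun s hs => by
      rw [interior_Icc] at hs
      rw [(hd s).deriv]; exact h s hs.1.le hs.2.le)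
    0 (by simp [hx]) x (by simp [hx]) hx
  simp only [mul_zero, neg_zero, Real.exp_zero, sub_self, PE_zero, sub_zero] at this
  linarith

end ProductExpectation

/-! ### The mean of the size-biased partial sums, compared with the clock process -/

section Chain

variable {ι : Type*} [Fintype ι] [DecidableEq ι]

/-- Expected weight of the first `m` size-biased picks without replacement from `R`. -/
noncomputable def sbU (w : ι → ℝ) : ℕ → Finset ι → ℝ
  | 0, _ => 0
  | m + 1, R => ∑ p ∈ R, w p / (∑ j ∈ R, w j) * (w p + sbU w m (R.erase p))

theorem sbU_nonneg {w : ι → ℝ} (hw : ∀ i, 0 < w i) : ∀ (m : ℕ) (R : Finset ι), 0 ≤ sbU w m R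
  | 0, _ => le_rfl
  | m + 1, R => by
    unfold sbU
    refine Finset.sum_nonneg fun p _ => ?_
    have h1 := sbU_nonneg hw m (R.erase p)
    have h2 := hw p
    have h3 : 0 ≤ ∑ j ∈ R, w j := Finset.sum_nonneg fun j _ => (hw j).le
    positivity

theorem small_subset_weight {w : ι → ℝ} (hw : ∀ i, 0 < w i) {L : ℝ} (hL : 0 < L)
    (h2 : ∑ i, w i ^ 2 ≤ 2 * L) (S : Finset ι) (hS : 8 * (S.card : ℝ) ≤ L) :
    ∑ i ∈ S, w i ≤ L / 2 := by
  have h := sq_sum_le_card_mul_sum_sq (s := S) (f := w)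
  have h3 : ∑ i ∈ S, w i ^ 2 ≤ 2 * L :=
    (Finset.sum_le_univ_sum_of_nonneg fun i => sq_nonneg (w i)).trans h2
  have h4 : (∑ i ∈ S, w i) ^ 2 ≤ (L / 2) ^ 2 := by
    have : (S.card : ℝ) * ∑ i ∈ S, w i ^ 2 ≤ (L / 8) * (2 * L) :=
      mul_le_mul (by linarith) h3 (Finset.sum_nonneg fun i _ => sq_nonneg (w i)) (by linarith)
    nlinarith
  exact le_of_sq_le_sq h4 (by linarith) 

theorem compl_weight {w : ι → ℝ} (S : Finset ι) :
    ∑ i ∈ Sᶜ, w i = ∑ i, w i - ∑ i ∈ S, w i := by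
  rw [← Finset.sum_add_sum_compl S]; ring

theorem compl_erase (S : Finset ι) (j : ι) : Sᶜ.erase j = (insert j S)ᶜ := by
  ext i; simp

theorem sbU_le {w : ι → ℝ} (hw : ∀ i, 0 < w i) (hL : 0 < ∑ i, w i)
    (h2 : ∑ i, w i ^ 2 ≤ 2 * ∑ i, w i) (k : ℕ) (hk : 8 * (k : ℝ) ≤ ∑ i, w i) :
    ∀ (m : ℕ) (S : Finset ι), S.card + m ≤ k → sbU w m Sᶜ ≤ 4 * m
  | 0, _, _ => by simp [sbU]
  | m + 1, S, hS => by
    have hSk : (S.card : ℝ) ≤ k := by exact_mod_cast (by omega : S.card ≤ k)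
    have hW := small_subset_weight hw hL h2 S (by linarith)
    have hc := compl_weight (w := w) S
    have hWpos : 0 < ∑ i ∈ Sᶜ, w i := by linarith
    unfold sbU
    have hstep : ∀ p ∈ Sᶜ, w p / (∑ j ∈ Sᶜ, w j) * (w p + sbU w m (Sᶜ.erase p)) ≤
        w p ^ 2 / (∑ j ∈ Sᶜ, w j) + 4 * m * (w p / (∑ j ∈ Sᶜ, w j)) := by
      intro p hp
      have hp' : p ∉ S := by simpa using hp
      have := sbU_le hw hL h2 k hk m (insert p S) (by
        rw [Finset.card_insert_of_notMem hp']; omega)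
      rw [compl_erase]
      have hwp := hw p
      have hq : 0 ≤ w p / (∑ j ∈ Sᶜ, w j) := by positivity
      calc _ ≤ w p / (∑ j ∈ Sᶜ, w j) * (w p + 4 * m) := by gcongr
        _ = _ := by ring
    refine (Finset.sum_le_sum hstep).trans ?_
    rw [Finset.sum_add_distrib, ← Finset.mul_sum, ← Finset.sum_div, ← Finset.sum_div,
      div_self hWpos.ne']
    have h3 : ∑ i ∈ Sᶜ, w i ^ 2 ≤ 2 * ∑ i, w i :=
      (Finset.sum_le_univ_sum_of_nonneg fun i => sq_nonneg (w i)).trans h2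
    have h4 : (∑ i ∈ Sᶜ, w i ^ 2) / (∑ j ∈ Sᶜ, w j) ≤ 4 := by
      rw [div_le_iff₀ hWpos]; linarith
    push_cast
    linarith

/-- The interpolating functional. -/
noncomputable def sbV (w : ι → ℝ) (k : ℕ) (S : Finset ι) : ℝ :=
  ∑ i ∈ S, w i + sbU w (k - S.card) Sᶜ

theorem sbV_gen_lt {w : ι → ℝ} (hw : ∀ i, 0 < w i) (k : ℕ) (S : Finset ι) (hS : S.card < k) :
    ∑ j ∈ Sᶜ, w j * (sbV w k (insert j S) - sbV w k S) = 0 := by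
  rcases Finset.eq_empty_or_nonempty Sᶜ with he | hne
  · simp [he]
  have hWpos : 0 < ∑ i ∈ Sᶜ, w i := Finset.sum_pos (fun i _ => hw i) hne
  obtain ⟨m, hm⟩ : ∃ m, k - S.card = m + 1 := ⟨k - S.card - 1, by omega⟩
  have h1 : ∀ j ∈ Sᶜ, w j * (sbV w k (insert j S) - sbV w k S) =
      (∑ i ∈ Sᶜ, w i) * (w j / (∑ i ∈ Sᶜ, w i) * (w j + sbU w m (Sᶜ.erase j)))
        - w j * sbU w (m + 1) Sᶜ := by
    intro j hj
    have hj' : j ∉ S := by simpa using hj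
    unfold sbV
    rw [Finset.card_insert_of_notMem hj', Finset.sum_insert hj', hm, compl_erase,
      (by omega : k - (S.card + 1) = m)]
    field_simp
    ring
  rw [Finset.sum_congr rfl h1, Finset.sum_sub_distrib, ← Finset.mul_sum, ← Finset.sum_mul]
  have : sbU w (m + 1) Sᶜ = ∑ j ∈ Sᶜ, w j / (∑ i ∈ Sᶜ, w i) * (w j + sbU w m (Sᶜ.erase j)) := by
    conv_lhs => unfold sbU
  rw [this]; ring

theorem sbV_ge (w : ι → ℝ) (k : ℕ) (S : Finset ι) (hS : k ≤ S.card) :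
    sbV w k S = ∑ i ∈ S, w i := by
  unfold sbV
  rw [(by omega : k - S.card = 0)]
  simp [sbU]

theorem sbV_step_ge (w : ι → ℝ) (k : ℕ) (S : Finset ι) (hS : k ≤ S.card) (j : ι) (hj : j ∉ S) :
    sbV w k (insert j S) - sbV w k S = w j := by
  rw [sbV_ge _ _ _ hS, sbV_ge, Finset.sum_insert hj]
  · ring
  · rw [Finset.card_insert_of_notMem hj]; omega

theorem clockp_bounds {w : ι → ℝ} (hw : ∀ i, 0 < w i) (hL : 0 < ∑ i, w i)
    (s : ℝ) (hs : 0 ≤ s) (j : ι) :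
    0 ≤ 1 - Real.exp (-(w j / (∑ i, w i) * s)) ∧ 1 - Real.exp (-(w j / (∑ i, w i) * s)) ≤ 1 ∧
    1 - Real.exp (-(w j / (∑ i, w i) * s)) ≤ w j / (∑ i, w i) * s := by
  have := hw j
  have h : 0 ≤ w j / (∑ i, w i) * s := by positivity
  refine ⟨?_, ?_, ?_⟩
  · have := Real.exp_le_one_iff.2 (neg_nonpos.2 h); linarith
  · linarith [Real.exp_pos (-(w j / (∑ i, w i) * s))]
  · linarith [Real.add_one_le_exp (-(w j / (∑ i, w i) * s))]

theorem clockp_sum_le {w : ι → ℝ} (hw : ∀ i, 0 < w i) (hL : 0 < ∑ i, w i)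
    (s : ℝ) (hs : 0 ≤ s) (a : ι → ℝ) (ha : ∀ i, 0 ≤ a i) :
    ∑ j, (1 - Real.exp (-(w j / (∑ i, w i) * s))) * a j ≤ s * (∑ j, w j * a j) / ∑ i, w i := by
  calc _ ≤ ∑ j, (w j / (∑ i, w i) * s) * a j :=
        Finset.sum_le_sum fun j _ =>
          mul_le_mul_of_nonneg_right (clockp_bounds hw hL s hs j).2.2 (ha j)
    _ = _ := by
        rw [Finset.mul_sum, Finset.sum_div]
        exact Finset.sum_congr rfl fun j _ => by ring

theorem clock_N_abs {w : ι → ℝ} (hw : ∀ i, 0 < w i) (hL : 0 < ∑ i, w i)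
    (s x : ℝ) (hs : 0 ≤ s) (hsx : s ≤ x) (hx : 1 ≤ x) :
    PE (fun j => 1 - Real.exp (-(w j / (∑ i, w i) * s)))
      (fun S => |∑ j ∈ S, (1:ℝ) - ∑ j, (1 - Real.exp (-(w j / (∑ i, w i) * s))) * 1|)
      ≤ 6 * Real.sqrt x := by
  have hsq : 1 ≤ Real.sqrt x := by rw [Real.one_le_sqrt]; exact hx
  have h := PE_abs (fun j => (clockp_bounds hw hL s hs j).1)
    (fun j => (clockp_bounds hw hL s hs j).2.1) (fun _ : ι => (1:ℝ)) (1 / Real.sqrt x) x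
    (by positivity) (fun j => by
      rw [mul_one, abs_of_nonneg (by positivity), div_le_one (by positivity)]; exact hsq)
    (by
      have := clockp_sum_le hw hL s hs (fun _ => 1 ^ 2) (by simp)
      refine this.trans ?_
      simp only [one_pow, mul_one]
      rw [mul_div_assoc, div_self hL.ne', mul_one]; exact hsx)
  refine h.trans ?_
  have e : (1 / Real.sqrt x) ^ 2 * x = 1 := by
    rw [div_pow, Real.sq_sqrt (by linarith)]; field_simp
  rw [e, div_div_eq_mul_div, div_one]
  have := Real.exp_one_lt_d9
  nlinarith

theorem chain_mean_bound {w : ι → ℝ} (hw : ∀ i, 0 < w i) (hL : 0 < ∑ i, w i)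
    (h2 : ∑ i, w i ^ 2 ≤ 2 * ∑ i, w i) (x : ℝ) (hx : 1 ≤ x)
    (hxL : 16 * x ≤ ∑ i, w i) (k : ℕ) (hk : 8 * (k : ℝ) ≤ ∑ i, w i) :
    |sbU w k Finset.univ - ∑ j, (1 - Real.exp (-(w j / (∑ i, w i) * x))) * w j| ≤
      4 * |(k : ℝ) - ∑ j, (1 - Real.exp (-(w j / (∑ i, w i) * x))) * 1| + 36 * Real.sqrt x := by
  have hx0 : 0 ≤ x := by linarith
  set L := ∑ i, w i with hLdef
  set p : ι → ℝ := fun j => 1 - Real.exp (-(w j / L * x)) with hp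
  set h := ∑ j, p j * 1 with hh
  have p0 : ∀ j, 0 ≤ p j := fun j => (clockp_bounds hw hL x hx0 j).1
  have p1 : ∀ j, p j ≤ 1 := fun j => (clockp_bounds hw hL x hx0 j).2.1
  have hN := clock_N_abs hw hL x x hx0 le_rfl hx
  have hV0 : sbV w k ∅ = sbU w k Finset.univ := by simp [sbV]
  have hg : PE p (fun S => ∑ j ∈ S, w j) = ∑ j, p j * w j := PE_linear p w
  -- upper bound
  have hup : sbU w k Finset.univ ≤ ∑ j, p j * w j + 4 * |(k : ℝ) - h| + 24 * Real.sqrt x := by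
    have hd := PE_dynkin_le (fun j => w j / L) (fun S => - sbV w k S) x 0 hx0 (by
      intro s hs hsx
      have hz : PE (fun j => 1 - Real.exp (-(w j / L * s))) (fun _ => (0:ℝ)) = 0 := PE_const _ _
      rw [← hz]
      refine PE_mono (fun j => (clockp_bounds hw hL s hs j).1)
        (fun j => (clockp_bounds hw hL s hs j).2.1) fun S => ?_
      rcases lt_or_ge S.card k with hS | hS
      · have := sbV_gen_lt hw k S hS
        have e : ∑ j ∈ Sᶜ, w j / L * (-sbV w k (insert j S) - -sbV w k S) =
            -(∑ j ∈ Sᶜ, w j * (sbV w k (insert j S) - sbV w k S)) / L := by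
          rw [← Finset.sum_neg_distrib, Finset.sum_div]
          exact Finset.sum_congr rfl fun j _ => by ring
        rw [e, this]; simp
      · refine Finset.sum_nonpos fun j hj => ?_
        have := sbV_step_ge w k S hS j (by simpa using hj)
        have hwj := hw j
        have e : -sbV w k (insert j S) - -sbV w k S = - w j := by linarith
        rw [e, mul_neg]
        exact neg_nonpos.2 (by positivity))
    have hneg : PE p (fun S => -sbV w k S) = - PE p (sbV w k) := by
      have := PE_smul p (-1) (sbV w k); simpa using this
    have hle : PE p (sbV w k) ≤ PE p (fun S => ∑ j ∈ S, w j +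
        (4 * |(k : ℝ) - h| + 4 * |∑ j ∈ S, (1:ℝ) - h|)) := by
      refine PE_mono p0 p1 fun S => ?_
      unfold sbV
      gcongr
      rcases le_or_gt S.card k with hS | hS
      · have h1 := sbU_le hw hL h2 k hk (k - S.card) S (by omega)
        rw [Nat.cast_sub hS] at h1
        have h3 := le_abs_self ((k : ℝ) - h)
        have h4 := neg_abs_le (∑ j ∈ S, (1:ℝ) - h)
        simp at h4 ⊢
        linarith
      · rw [(by omega : k - S.card = 0)]
        simp only [sbU]; positivity
    rw [PE_add, PE_add, PE_const, PE_smul, hg] at hle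
    have hd' : - PE p (sbV w k) ≤ - sbV w k ∅ + 0 * x := hneg ▸ hd
    rw [hV0] at hd'
    linarith
  -- lower bound
  have hlo : ∑ j, p j * w j - 4 * |(k : ℝ) - h| - 36 * Real.sqrt x ≤ sbU w k Finset.univ := by
    have hd := PE_dynkin_le (fun j => w j / L)
      (fun S => sbV w k S - 4 * ((S.card - k : ℕ) : ℝ)) x (32 / L * (6 * Real.sqrt x)) hx0 (by
      intro s hs hsx
      have q0 : ∀ j, 0 ≤ 1 - Real.exp (-(w j / L * s)) := fun j => (clockp_bounds hw hL s hs j).1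
      have q1 : ∀ j, 1 - Real.exp (-(w j / L * s)) ≤ 1 :=
        fun j => (clockp_bounds hw hL s hs j).2.1
      set hs' := ∑ j, (1 - Real.exp (-(w j / L * s))) * 1 with hhs'
      have hNs : PE (fun j => 1 - Real.exp (-(w j / L * s)))
        (fun S => |∑ j ∈ S, (1:ℝ) - hs'|) ≤ 6 * Real.sqrt x := clock_N_abs hw hL s x hs hsx hx
      have hhs : hs' ≤ x := by
        have := clockp_sum_le hw hL s hs (fun _ => 1) (by simp)
        refine this.trans ?_
        simp only [mul_one]
        rw [mul_div_assoc, div_self hL.ne', mul_one]; exact hsx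
      have : PE (fun j => 1 - Real.exp (-(w j / L * s))) (fun S => ∑ j ∈ Sᶜ, w j / L *
          ((sbV w k (insert j S) - 4 * (((insert j S).card - k : ℕ) : ℝ)) -
            (sbV w k S - 4 * ((S.card - k : ℕ) : ℝ)))) ≤
          PE (fun j => 1 - Real.exp (-(w j / L * s)))
            (fun S => 32 / L * |∑ j ∈ S, (1:ℝ) - hs'|) := by
        refine PE_mono q0 q1 fun S => ?_
        have hnn : 0 ≤ 32 / L * |∑ j ∈ S, (1:ℝ) - hs'| := by positivity
        rcases lt_or_ge S.card k with hS | hS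
        · have hz := sbV_gen_lt hw k S hS
          have e : ∑ j ∈ Sᶜ, w j / L *
            ((sbV w k (insert j S) - 4 * (((insert j S).card - k : ℕ) : ℝ)) -
              (sbV w k S - 4 * ((S.card - k : ℕ) : ℝ))) =
              (∑ j ∈ Sᶜ, w j * (sbV w k (insert j S) - sbV w k S)) / L := by
            rw [Finset.sum_div]
            refine Finset.sum_congr rfl fun j hj => ?_
            rw [Finset.card_insert_of_notMem (by simpa using hj),
              (by omega : S.card + 1 - k = 0), (by omega : S.card - k = 0)]
            simp; ring
          rw [e, hz]; simpa using hnn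
        · have e : ∑ j ∈ Sᶜ, w j / L *
            ((sbV w k (insert j S) - 4 * (((insert j S).card - k : ℕ) : ℝ)) -
              (sbV w k S - 4 * ((S.card - k : ℕ) : ℝ))) =
              (∑ j ∈ Sᶜ, w j ^ 2) / L - 4 * (∑ j ∈ Sᶜ, w j) / L := by
            rw [Finset.mul_sum, Finset.sum_div, Finset.sum_div, ← Finset.sum_sub_distrib]
            refine Finset.sum_congr rfl fun j hj => ?_
            have h1 := sbV_step_ge w k S hS j (by simpa using hj)
            rw [Finset.card_insert_of_notMem (by simpa using hj),
              (by omega : S.card + 1 - k = (S.card - k) + 1)]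
            push_cast
            have h5 : sbV w k (insert j S) = sbV w k S + w j := by linarith
            rw [h5]; ring
          rw [e, ← sub_div]
          have h3 : ∑ i ∈ Sᶜ, w i ^ 2 ≤ 2 * L :=
            (Finset.sum_le_univ_sum_of_nonneg fun i => sq_nonneg (w i)).trans h2
          have hc := compl_weight (w := w) S
          rcases le_or_gt (8 * (S.card : ℝ)) L with hsm | hbig
          · have h4 := small_subset_weight hw hL h2 S hsm
            refine le_trans ?_ hnn
            apply div_nonpos_of_nonpos_of_nonneg _ hL.le
            linarith
          · have h5 : 0 ≤ ∑ i ∈ Sᶜ, w i := Finset.sum_nonneg fun i _ => (hw i).le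
            rw [div_mul_eq_mul_div]
            apply div_le_div_of_nonneg_right _ hL.le
            have h6 := le_abs_self (∑ j ∈ S, (1:ℝ) - hs')
            have h7 : ∑ j ∈ S, (1:ℝ) = S.card := by simp
            rw [h7] at h6 ⊢
            linarith
      refine this.trans ?_
      rw [PE_smul]
      exact mul_le_mul_of_nonneg_left hNs (by positivity))
    have hge : PE p (fun S => ∑ j ∈ S, w j -
        (4 * |(k : ℝ) - h| + 4 * |∑ j ∈ S, (1:ℝ) - h|)) ≤
        PE p (fun S => sbV w k S - 4 * ((S.card - k : ℕ) : ℝ)) := by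
      refine PE_mono p0 p1 fun S => ?_
      have h1 := sbU_nonneg hw (k - S.card) Sᶜ
      have h3 := neg_abs_le ((k : ℝ) - h)
      have h4 := le_abs_self (∑ j ∈ S, (1:ℝ) - h)
      have h5 : ((S.card - k : ℕ) : ℝ) ≤ |(k : ℝ) - h| + |∑ j ∈ S, (1:ℝ) - h| := by
        rcases le_or_gt k S.card with hS | hS
        · rw [Nat.cast_sub hS]
          simp at h4 ⊢
          linarith
        · rw [(by omega : S.card - k = 0)]
          simp; positivity
      unfold sbV
      linarith
    rw [PE_sub, PE_add, PE_const, PE_smul, hg] at hge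
    have hd' : PE p (fun S => sbV w k S - 4 * ((S.card - k : ℕ) : ℝ)) ≤
        sbV w k ∅ - 4 * (((∅ : Finset ι).card - k : ℕ) : ℝ) + 32 / L * (6 * Real.sqrt x) * x := hd
    have hz : 4 * (((∅ : Finset ι).card - k : ℕ) : ℝ) = 0 := by simp
    rw [hV0, hz] at hd'
    have hκ : 32 / L * (6 * Real.sqrt x) * x ≤ 12 * Real.sqrt x := by
      have e : 32 / L * (6 * Real.sqrt x) * x = (12 * Real.sqrt x) * (16 * x / L) := by ring
      rw [e]
      have : 16 * x / L ≤ 1 := by rw [div_le_one hL]; exact hxL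
      nlinarith [Real.sqrt_nonneg x]
    linarith
  rw [abs_le]
  constructor <;> linarith [Real.sqrt_nonneg x]

end Chain

/-! ### Identification of the size-biased means -/

section SizeBiased

/-- Probability of the permutation `σ` under the size-biased order. -/
noncomputable def sbProb {n : ℕ} (f : Fin n → ℝ) (σ : Equiv.Perm (Fin n)) : ℝ :=
  ∏ i : Fin n, f (σ i) / ((∑ k, f k) - ∑ k ∈ Finset.univ.filter fun k => k < i, f (σ k))

theorem sum_swap_succ {n : ℕ} (f : Fin (n + 1) → ℝ) (p : Fin (n + 1)) :
    ∑ k : Fin n, f (Equiv.swap 0 p k.succ) = ∑ k, f k - f p := by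
  have h := Equiv.sum_comp (Equiv.swap 0 p) f
  rw [Fin.sum_univ_succ] at h
  simp only [Equiv.swap_apply_left] at h
  linarith

theorem sbProb_succ {n : ℕ} (f : Fin (n + 1) → ℝ) (p : Fin (n + 1)) (τ : Equiv.Perm (Fin n)) :
    sbProb f (Equiv.Perm.decomposeFin.symm (p, τ)) =
      f p / (∑ k, f k) * sbProb (fun k : Fin n => f (Equiv.swap 0 p k.succ)) τ := by
  unfold sbProb
  rw [Fin.prod_univ_succ]
  congr 1
  · simp
  · refine Finset.prod_congr rfl fun i _ => ?_
    rw [Equiv.Perm.decomposeFin_symm_apply_succ, sum_swap_succ]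
    congr 1
    rw [Finset.sum_filter, Finset.sum_filter,
      Fin.sum_univ_succ (f := fun x => if x < i.succ then
        f ((Equiv.Perm.decomposeFin.symm (p, τ)) x) else 0)]
    simp only [Fin.succ_pos, if_true, Equiv.Perm.decomposeFin_symm_apply_zero,
      Fin.succ_lt_succ_iff, Equiv.Perm.decomposeFin_symm_apply_succ]
    ring

theorem sbProb_sum : ∀ {n : ℕ} (f : Fin n → ℝ), (∀ i, 0 < f i) →
    ∑ σ : Equiv.Perm (Fin n), sbProb f σ = 1
  | 0, f, _ => by simp [sbProb]
  | n + 1, f, hf => by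
    rw [← Equiv.sum_comp Equiv.Perm.decomposeFin.symm, Fintype.sum_prod_type]
    simp only [sbProb_succ, ← Finset.mul_sum]
    have : ∀ p : Fin (n + 1),
        ∑ τ, sbProb (fun k : Fin n => f (Equiv.swap 0 p k.succ)) τ = 1 :=
      fun p => sbProb_sum _ fun i => hf _
    simp only [this, mul_one]
    rw [← Finset.sum_div, div_self]
    exact (Finset.sum_pos (fun i _ => hf i) Finset.univ_nonempty).ne'

theorem sbProb_mean {ι : Type*} [DecidableEq ι] (w : ι → ℝ) (hw : ∀ i, 0 < w i) :
    ∀ {n : ℕ} (e : Fin n → ι), Function.Injective e → ∀ N : ℕ,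
    ∑ σ : Equiv.Perm (Fin n), sbProb (fun i => w (e i)) σ *
      (∑ i : Fin n, if (i : ℕ) < N then w (e (σ i)) else 0) = sbU w N (Finset.univ.image e)
  | _, e, _, 0 => by simp [sbU]
  | 0, e, _, N + 1 => by simp [sbU]
  | n + 1, e, he, N + 1 => by
    rw [← Equiv.sum_comp Equiv.Perm.decomposeFin.symm, Fintype.sum_prod_type]
    unfold sbU
    rw [Finset.sum_image (fun a _ b _ h => he h), Finset.sum_image (fun a _ b _ h => he h)]
    refine Finset.sum_congr rfl fun p _ => ?_
    simp only [sbProb_succ, mul_assoc]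
    rw [← Finset.mul_sum]
    congr 1
    simp only [Fin.sum_univ_succ (n := n), Equiv.Perm.decomposeFin_symm_apply_zero,
      Equiv.Perm.decomposeFin_symm_apply_succ, Fin.val_zero, Fin.val_succ, Nat.succ_pos, if_true,
      Nat.add_lt_add_iff_right, mul_add]
    rw [Finset.sum_add_distrib, ← Finset.sum_mul, sbProb_sum _ (fun i => hw _), one_mul]
    congr 1
    have ih := sbProb_mean w hw (fun k : Fin n => e (Equiv.swap 0 p k.succ))
      (fun a b h => by
        have := (Equiv.swap 0 p).injective (he h)
        exact Fin.succ_injective _ this) N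
    rw [ih]
    congr 1
    ext j
    simp only [Finset.mem_image, Finset.mem_univ, true_and, Finset.mem_erase]
    constructor
    · rintro ⟨k, rfl⟩
      refine ⟨fun h => ?_, _, rfl⟩
      have h1 := he h
      have h2 : Equiv.swap 0 p k.succ = Equiv.swap 0 p 0 := by rw [h1]; simp
      exact Fin.succ_ne_zero _ ((Equiv.swap 0 p).injective h2)
    · rintro ⟨hne, i, rfl⟩
      have h0 : Equiv.swap 0 p i ≠ 0 := by
        intro h
        apply hne
        have : i = Equiv.swap 0 p 0 := (Equiv.swap 0 p).injective (by rw [h]; simp)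
        rw [this]; simp
      obtain ⟨k, hk⟩ := Fin.exists_succ_eq.2 h0
      exact ⟨k, by rw [hk]; simp⟩

theorem integral_sbMeasure {n : ℕ} (wn : Fin n → ℝ) (hw : ∀ i, 0 < wn i)
    (F : (Fin n → Fin n) → ℝ) :
    ∫ ω, F ω ∂sbMeasure n wn = ∑ σ : Equiv.Perm (Fin n), sbProb wn σ * F σ := by
  unfold sbMeasure
  rw [Measure.sum_fintype, integral_finsetSum_measure]
  · refine Finset.sum_congr rfl fun σ _ => ?_
    rw [integral_smul_measure, integral_dirac, smul_eq_mul, ENNReal.toReal_ofReal]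
    · rfl
    · refine Finset.prod_nonneg fun i _ => div_nonneg (hw _).le ?_
      rw [sub_nonneg, ← Equiv.sum_comp σ wn]
      exact Finset.sum_le_univ_sum_of_nonneg fun k => (hw _).le
  · intro σ _
    exact (integrable_dirac (by simp)).smul_measure ENNReal.ofReal_ne_top

theorem sum_sbW {n : ℕ} (wn : Fin n → ℝ) (v : Fin n → Fin n) (N : ℕ) (hN : N ≤ n) :
    ∑ k ∈ Finset.Icc 1 N, sbW wn v k = ∑ i : Fin n, if (i : ℕ) < N then wn (v i) else 0 := by
  have h1 : ∑ i : Fin n, (if (i : ℕ) < N then wn (v i) else 0) =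
      ∑ i ∈ Finset.range n, if h : i < n then (if i < N then wn (v ⟨i, h⟩) else 0) else 0 := by
    rw [Finset.sum_range]; simp
  rw [h1, Finset.range_eq_Ico, ← Finset.sum_Ico_consecutive _ (Nat.zero_le N) hN]
  have h2 : ∑ i ∈ Finset.Ico N n, (if h : i < n then (if i < N then wn (v ⟨i, h⟩) else 0) else 0)
      = 0 := by
    refine Finset.sum_eq_zero fun i hi => ?_
    rw [Finset.mem_Ico] at hi
    simp [not_lt.2 hi.1]
  rw [h2, add_zero, ← Finset.range_eq_Ico]
  have h3 : Finset.Icc 1 N = Finset.Ico 1 (N + 1) := by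
    ext; simp [Nat.lt_succ_iff]
  rw [h3, Finset.sum_Ico_eq_sum_range]
  refine Finset.sum_congr rfl fun i hi => ?_
  have hi' : i < N := by simpa using hi
  have hin : i < n := by omega
  simp [sbW, hi', hin]

theorem sum_mean_eq {n : ℕ} (wn : Fin n → ℝ) (hw : ∀ i, 0 < wn i) (N : ℕ) (hN : N ≤ n) :
    ∑ k ∈ Finset.Icc 1 N, ∫ ω', sbW wn ω' k ∂sbMeasure n wn = sbU wn N Finset.univ := by
  have := sbProb_mean wn hw (fun i : Fin n => i) (fun _ _ h => h) N
  simp only [Finset.image_id'] at this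
  rw [← this]
  simp only [integral_sbMeasure wn hw]
  rw [Finset.sum_comm]
  refine Finset.sum_congr rfl fun σ _ => ?_
  rw [← Finset.mul_sum, sum_sbW _ _ _ hN]

end SizeBiased

/-! ### Bridge from clocks to random subsets, and the bound for fixed `n` -/

section Bridge

/-- The set of clocks that have rung by time `x`. -/
noncomputable def rung {n : ℕ} (x : ℝ) (ω : Fin n → ℝ) : Finset (Fin n) :=
  Finset.univ.filter fun k => ω k ≤ x

theorem Nclock_eq {n : ℕ} (x : ℝ) (ω : Fin n → ℝ) : Nclock x ω = (rung x ω).card := by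
  simp [Nclock, rung]

theorem Xclock_eq {n : ℕ} (wn : Fin n → ℝ) (x : ℝ) (ω : Fin n → ℝ) :
    Xclock wn x ω = ∑ k ∈ rung x ω, wn k := by
  simp [Xclock, rung, Finset.sum_filter]

theorem expMeasure_Iic {r : ℝ} (hr : 0 < r) {x : ℝ} (hx : 0 ≤ x) :
    ProbabilityTheory.expMeasure r (Set.Iic x) = ENNReal.ofReal (1 - Real.exp (-(r * x))) := by
  have := ProbabilityTheory.isProbabilityMeasure_expMeasure hr
  have h := ProbabilityTheory.cdf_expMeasure_eq hr x
  rw [if_pos hx, ProbabilityTheory.cdf_eq_real] at h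
  rw [← h, ofReal_measureReal]

theorem expMeasure_Ioi {r : ℝ} (hr : 0 < r) {x : ℝ} (hx : 0 ≤ x) :
    ProbabilityTheory.expMeasure r (Set.Ioi x) =
      ENNReal.ofReal (1 - (1 - Real.exp (-(r * x)))) := by
  have := ProbabilityTheory.isProbabilityMeasure_expMeasure hr
  have h := prob_compl_eq_one_sub (μ := ProbabilityTheory.expMeasure r) (measurableSet_Iic (a := x))
  rw [Set.compl_Iic, expMeasure_Iic hr hx] at h
  have h1 := Real.exp_le_one_iff.2 (neg_nonpos.2 (mul_nonneg hr.le hx))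
  rw [h, ← ENNReal.ofReal_one, ← ENNReal.ofReal_sub 1 (by linarith)]

theorem clocks_rung_eq {n : ℕ} (wn : Fin n → ℝ) (hw : ∀ i, 0 < wn i) (hL : 0 < ∑ i, wn i)
    (x : ℝ) (hx : 0 ≤ x) (S : Finset (Fin n)) :
    clocksMeasure n wn {ω | rung x ω = S} =
      ENNReal.ofReal ((∏ j ∈ S, (1 - Real.exp (-(wn j / (∑ i, wn i) * x)))) *
        ∏ j ∈ Sᶜ, (1 - (1 - Real.exp (-(wn j / (∑ i, wn i) * x))))) := by
  have : ∀ k, IsProbabilityMeasure (ProbabilityTheory.expMeasure (wn k / ∑ i, wn i)) :=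
    fun k => ProbabilityTheory.isProbabilityMeasure_expMeasure (div_pos (hw k) hL)
  have hset : {ω : Fin n → ℝ | rung x ω = S} =
      Set.pi Set.univ (fun j => if j ∈ S then Set.Iic x else Set.Ioi x) := by
    ext ω
    simp only [Set.mem_ofPred_eq, Set.mem_pi, Set.mem_univ, forall_true_left, rung, Finset.ext_iff,
      Finset.mem_filter, Finset.mem_univ, true_and]
    refine forall_congr' fun j => ?_
    by_cases hj : j ∈ S <;> simp [hj]
  rw [hset, clocksMeasure, Measure.pi_pi, ← Finset.prod_mul_prod_compl S,
    ENNReal.ofReal_mul, ENNReal.ofReal_prod_of_nonneg, ENNReal.ofReal_prod_of_nonneg]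
  · congr 1
    · refine Finset.prod_congr rfl fun j hj => ?_
      rw [if_pos hj, expMeasure_Iic (div_pos (hw j) hL) hx]
    · refine Finset.prod_congr rfl fun j hj => ?_
      rw [if_neg (by simpa using hj), expMeasure_Ioi (div_pos (hw j) hL) hx]
  · intro j _
    exact sub_nonneg.2 (clockp_bounds hw hL x hx j).2.1
  · intro j _
    exact (clockp_bounds hw hL x hx j).1
  · exact Finset.prod_nonneg fun j _ => (clockp_bounds hw hL x hx j).1

theorem clocks_le {n : ℕ} (wn : Fin n → ℝ) (hw : ∀ i, 0 < wn i) (hL : 0 < ∑ i, wn i)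
    (x : ℝ) (hx : 0 ≤ x) (Q : Finset (Fin n) → Prop) :
    clocksMeasure n wn {ω | Q (rung x ω)} ≤
      ENNReal.ofReal (PE (fun j => 1 - Real.exp (-(wn j / (∑ i, wn i) * x)))
        (fun S => if Q S then 1 else 0)) := by
  have hset : {ω : Fin n → ℝ | Q (rung x ω)} =
      ⋃ S ∈ Finset.univ.filter Q, {ω | rung x ω = S} := by
    ext ω; simp
  rw [hset]
  refine (measure_biUnion_finset_le _ _).trans ?_
  unfold PE
  simp only [mul_ite, mul_one, mul_zero]
  rw [← Finset.sum_filter, ENNReal.ofReal_sum_of_nonneg]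
  · exact Finset.sum_le_sum fun S _ => (clocks_rung_eq wn hw hL x hx S).le
  · intro S _
    exact mul_nonneg (Finset.prod_nonneg fun j _ => (clockp_bounds hw hL x hx j).1)
      (Finset.prod_nonneg fun j _ => sub_nonneg.2 (clockp_bounds hw hL x hx j).2.1)

theorem fixed_n_bound {n : ℕ} (wn : Fin n → ℝ) (hw : ∀ i, 0 < wn i) (hL : 0 < ∑ i, wn i)
    (h2 : ∑ i, wn i ^ 2 ≤ 2 * ∑ i, wn i) (D : ℝ) (hD : 0 < D)
    (h3 : ∑ i, wn i ^ 3 ≤ D * ∑ i, wn i) (B : ℝ) (hB : 1 ≤ B) (hwB : ∀ i, wn i ≤ B)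
    (x y : ℝ) (hx : 1 ≤ x) (hy : 0 < y) (hxL : 16 * x ≤ ∑ i, wn i) (hyL : 16 * y ≤ ∑ i, wn i)
    (hxy : 108 * Real.sqrt x ≤ y) :
    clocksMeasure n wn
      {ω : Fin n → ℝ | y ≤ |Xclock wn x ω - ∑ k ∈ Finset.Icc 1 (Nclock x ω),
          ∫ ω', sbW wn ω' k ∂sbMeasure n wn|}
      ≤ ENNReal.ofReal (4 * Real.exp (-y ^ 2 / (576 * (D + 1) * (y * B + x)))) := by
  have hx0 : 0 ≤ x := by linarith
  set p : Fin n → ℝ := fun j => 1 - Real.exp (-(wn j / (∑ i, wn i) * x)) with hp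
  have p0 : ∀ j, 0 ≤ p j := fun j => (clockp_bounds hw hL x hx0 j).1
  have p1 : ∀ j, p j ≤ 1 := fun j => (clockp_bounds hw hL x hx0 j).2.1
  have hset : {ω : Fin n → ℝ | y ≤ |Xclock wn x ω - ∑ k ∈ Finset.Icc 1 (Nclock x ω),
          ∫ ω', sbW wn ω' k ∂sbMeasure n wn|} =
      {ω | y ≤ |∑ k ∈ rung x ω, wn k - sbU wn (rung x ω).card Finset.univ|} := by
    ext ω
    have hc : (rung x ω).card ≤ n := by
      simpa using Finset.card_le_univ (rung x ω)
    rw [Set.mem_ofPred_eq, Set.mem_ofPred_eq, Nclock_eq, Xclock_eq, sum_mean_eq wn hw _ hc]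
  rw [hset]
  refine (clocks_le wn hw hL x hx0
    (fun S => y ≤ |∑ k ∈ S, wn k - sbU wn S.card Finset.univ|)).trans ?_
  apply ENNReal.ofReal_le_ofReal
  have hV1 : ∑ j, p j * wn j ^ 2 ≤ D * x := by
    refine (clockp_sum_le hw hL x hx0 (fun j => wn j ^ 2) (fun j => sq_nonneg _)).trans ?_
    rw [div_le_iff₀ hL]
    have e : ∑ j, wn j * wn j ^ 2 = ∑ j, wn j ^ 3 :=
      Finset.sum_congr rfl fun j _ => by ring
    rw [e]
    nlinarith
  have hp1 : ∑ j, p j * 1 ≤ x := by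
    refine (clockp_sum_le hw hL x hx0 (fun _ => 1) (by simp)).trans ?_
    simp only [mul_one]
    rw [mul_div_assoc, div_self hL.ne', mul_one]
  have hT1 := PE_tail p0 p1 wn B (D * x) (y / 3) (by linarith) (by positivity) (by positivity)
    (fun j => by rw [abs_of_pos (hw j)]; exact hwB j) hV1
  have hT2 := PE_tail p0 p1 (fun _ => (1:ℝ)) 1 x (y / 12) one_pos (by linarith) (by positivity)
    (fun j => by simp) (by simpa using hp1)
  have hmono : PE p (fun S => if y ≤ |∑ k ∈ S, wn k - sbU wn S.card Finset.univ| then 1 else 0) ≤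
      PE p (fun S => (if y / 3 ≤ |∑ j ∈ S, wn j - ∑ j, p j * wn j| then 1 else 0) +
        (if y / 12 ≤ |∑ j ∈ S, (1:ℝ) - ∑ j, p j * 1| then 1 else 0)) := by
    refine PE_mono p0 p1 fun S => ?_
    by_cases hA : y / 3 ≤ |∑ j ∈ S, wn j - ∑ j, p j * wn j|
    · rw [if_pos hA]
      split_ifs <;> norm_num
    by_cases hC : y / 12 ≤ |∑ j ∈ S, (1:ℝ) - ∑ j, p j * 1|
    · rw [if_pos hC, if_neg hA]
      split_ifs <;> norm_num
    rw [if_neg]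
    · rw [if_neg hA, if_neg hC]; norm_num
    push Not at hA hC ⊢
    have hcard : ∑ j ∈ S, (1:ℝ) = S.card := by simp
    rw [hcard] at hC
    have hb := chain_mean_bound hw hL h2 x hx hxL S.card (by
      have := (abs_lt.1 hC).2
      linarith)
    have htri : |∑ k ∈ S, wn k - sbU wn S.card Finset.univ| ≤
        |∑ j ∈ S, wn j - ∑ j, p j * wn j| + |sbU wn S.card Finset.univ - ∑ j, p j * wn j| := by
      have := abs_sub (∑ j ∈ S, wn j - ∑ j, p j * wn j)
        (sbU wn S.card Finset.univ - ∑ j, p j * wn j)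
      rwa [sub_sub_sub_cancel_right] at this
    have hb' : |sbU wn S.card Finset.univ - ∑ j, p j * wn j| ≤
      4 * |(S.card : ℝ) - ∑ j, p j * 1| + 36 * Real.sqrt x := hb
    linarith
  rw [PE_add] at hmono
  have hE1 : Real.exp (-((y / 3) ^ 2 / (2 * (2 * (D * x) + B * (y / 3))))) ≤
      Real.exp (-y ^ 2 / (576 * (D + 1) * (y * B + x))) := by
    apply Real.exp_le_exp.2
    rw [neg_div]
    apply neg_le_neg
    rw [div_le_div_iff₀ (by positivity) (by positivity)]
    have : 9 * (2 * (2 * (D * x) + B * (y / 3))) ≤ 576 * (D + 1) * (y * B + x) := by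
      have h1 : 0 < D * x := by positivity
      have h4 : 0 < y * B := by positivity
      have h5 : 0 < D * (y * B) := by positivity
      nlinarith
    have := mul_le_mul_of_nonneg_left this (sq_nonneg y)
    nlinarith
  have hE2 : Real.exp (-((y / 12) ^ 2 / (2 * (2 * x + 1 * (y / 12))))) ≤
      Real.exp (-y ^ 2 / (576 * (D + 1) * (y * B + x))) := by
    apply Real.exp_le_exp.2
    rw [neg_div]
    apply neg_le_neg
    rw [div_le_div_iff₀ (by positivity) (by positivity)]
    have : 144 * (2 * (2 * x + 1 * (y / 12))) ≤ 576 * (D + 1) * (y * B + x) := by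
      have h1 : 0 < D * x := by positivity
      have h4 : y ≤ y * B := by nlinarith
      have h5 : 0 < D * (y * B) := by positivity
      nlinarith
    have := mul_le_mul_of_nonneg_left this (sq_nonneg y)
    nlinarith
  linarith

end Bridge
/-- Lemma of the paper: concentration of `X(x_n)` around the running sum
of the means of the size-biased weights. -/
theorem clock_process_concentration_around_running_mean
    (w : ∀ n : ℕ, Fin n → ℝ) (μ : Measure ℝ) (hC : CondC w μ) :
    ∃ Abar > (0 : ℝ), ∃ A > (0 : ℝ), ∀ x y : ℕ → ℝ, Cond2 w Abar x y →
      ∀ᶠ n : ℕ in atTop,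
        clocksMeasure n (w n)
          {ω : Fin n → ℝ |
            y n ≤ |Xclock (w n) (x n) ω - ∑ k ∈ Finset.Icc 1 (Nclock (x n) ω),
                ∫ ω', sbW (w n) ω' k ∂sbMeasure n (w n)|}
        ≤ ENNReal.ofReal
            (A * Real.exp (-(y n) ^ 2 / (A * (y n * (n : ℝ) ^ ((1 : ℝ) / 3) + x n)))) := by
  have := hC.isProb
  set m := ∫ x, x ∂μ with hm
  set m3 := ∫ x, x ^ 3 ∂μ with hm3
  have hint : Integrable (fun x : ℝ => x) μ := by
    refine Integrable.mono' ((integrable_const (1:ℝ)).add hC.int3)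
      measurable_id.aestronglyMeasurable ?_
    filter_upwards [hC.pos] with x hx
    rw [Real.norm_eq_abs, abs_of_pos hx, Pi.add_apply]
    nlinarith [mul_pos hx hx, sq_nonneg (x - 1), mul_nonneg hx.le (sq_nonneg (x - 1))]
  have hmpos : 0 < m := by
    rw [hm, integral_pos_iff_support_of_nonneg_ae (hC.pos.mono fun x hx => hx.le) hint]
    have h1 : μ {x : ℝ | 0 < x} = 1 :=
      (measure_eq_measure_of_null_diff (Set.subset_univ _) (by
        have := hC.pos
        rw [ae_iff] at this
        convert this using 2
        ext x; simp)).trans measure_univ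
    refine lt_of_lt_of_le (by rw [h1]; exact one_pos) (measure_mono ?_)
    intro x hx
    exact ne_of_gt hx
  have hm3pos : 0 ≤ m3 :=
    integral_nonneg_of_ae (hC.pos.mono fun x hx => pow_nonneg (le_of_lt hx) 3)
  set D := 4 * (m3 + 1) / (3 * m) with hDdef
  have hD : 0 < D := by positivity
  refine ⟨11664, by norm_num, 576 * (D + 1), by positivity, fun x y h2 => ?_⟩
  have hxo := h2.a_lito
  have hyo := h2.b_bigO.trans_isLittleO h2.a_lito
  have e1 := hC.ell_asymp.def (c := m / 4) (by positivity)
  have e2 := hC.sq_asymp.def (c := m / 4) (by positivity)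
  have e3 := hC.cube_asymp.def (c := 1) one_pos
  have e4 := hC.max_asymp.def (c := 1) one_pos
  have e5 := hxo.def (c := 3 * m / 64) (by positivity)
  have e6 := hyo.def (c := 3 * m / 64) (by positivity)
  filter_upwards [e1, e2, e3, e4, e5, e6, h2.exp_lt, h2.a_top.eventually_ge_atTop 1,
    h2.b_top.eventually_gt_atTop 0, eventually_ge_atTop 1] with n e1 e2 e3 e4 e5 e6 hexp hx1 hy0 hn
  have hn1 : (1:ℝ) ≤ n := by exact_mod_cast hn
  have hpow : (n:ℝ) ^ ((2:ℝ) / 3) ≤ n := by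
    have := Real.rpow_le_rpow_of_exponent_le hn1 (by norm_num : (2:ℝ) / 3 ≤ 1)
    rwa [Real.rpow_one] at this
  have hpow0 : 0 ≤ (n:ℝ) ^ ((2:ℝ) / 3) := by positivity
  have hB1 : 1 ≤ (n:ℝ) ^ ((1:ℝ) / 3) := Real.one_le_rpow hn1 (by norm_num)
  rw [Real.norm_eq_abs, Real.norm_eq_abs, abs_of_nonneg hpow0, abs_le] at e1 e2
  rw [hC.moment_eq] at e2
  have hmn : m / 4 * (n:ℝ) ^ ((2:ℝ) / 3) ≤ m / 4 * n := by gcongr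
  have hell : 3 * m / 4 * n ≤ ∑ i, w n i := by
    have := e1.1
    unfold ell at this
    linarith
  have hmn0 : 0 < m * n := by positivity
  have hL : 0 < ∑ i, w n i := by linarith
  rw [Real.norm_eq_abs, Real.norm_eq_abs, abs_one, mul_one, abs_le] at e3
  rw [Real.norm_eq_abs, Real.norm_eq_abs, one_mul,
    abs_of_nonneg (by linarith : 0 ≤ (n:ℝ) ^ ((1:ℝ) / 3))] at e4
  rw [Real.norm_eq_abs, Real.norm_eq_abs, abs_of_nonneg (by linarith : (0:ℝ) ≤ n)] at e5 e6
  have hden : 0 < y n * (n:ℝ) ^ ((1:ℝ) / 3) + x n := by positivity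
  have hsqrt : 108 * Real.sqrt (x n) ≤ y n := by
    have h4 : Real.exp (-1) > 1 / 4 := by
      rw [Real.exp_neg, gt_iff_lt, one_div]
      apply inv_strictAnti₀ (Real.exp_pos 1)
      linarith [Real.exp_one_lt_d9]
    have h5 := Real.exp_lt_exp.1 (hexp.trans h4)
    rw [div_lt_iff₀ (by positivity)] at h5
    have h6 : 0 < y n * (n:ℝ) ^ ((1:ℝ) / 3) := by positivity
    apply le_of_sq_le_sq _ hy0.le
    rw [mul_pow, Real.sq_sqrt (by linarith)]
    linarith
  have hmain := fixed_n_bound (w n) (hC.w_pos n) hL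
    (by linarith [e2.2]) D hD
    (by
      have h7 : (m3 + 1) * n ≤ D * ∑ i, w n i := by
        calc (m3 + 1) * n = D * (3 * m / 4 * n) := by rw [hDdef]; field_simp
          _ ≤ _ := by gcongr
      linarith [e3.2]) ((n:ℝ) ^ ((1:ℝ) / 3)) hB1
    (fun i => (le_ciSup (Set.finite_range (w n)).bddAbove i).trans ((le_abs_self _).trans e4))
    (x n) (y n) hx1 hy0 (by linarith [le_abs_self (x n)]) (by linarith [le_abs_self (y n)]) hsqrt
  refine hmain.trans (ENNReal.ofReal_le_ofReal ?_)
  exact mul_le_mul_of_nonneg_right (by linarith) (Real.exp_pos _).le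
end

section
/- Assume Conditions (C). There exists a constant A > 0 such that for any pair of sequences (m, y) verifying Conditions (C2): P(sup_{0 ≤ t ≤ m} (X(t) − E[X(t)]) ≥ y) ≤ A·exp(−y²/(A(y·n^{1/3} + m))). -/
open MeasureTheory Filter Asymptotics
open scoped Classical ENNReal Topology

/-- The sign attached to a Boolean. -/
noncomputable def sgnB (b : Bool) : ℝ := if b then 1 else -1

theorem sgnB_not (b : Bool) : sgnB (!b) = - sgnB b := by
  cases b <;> simp [sgnB]

theorem cosh_sgnB_average {n : ℕ} (a : Fin n) (v : ℝ) (f : (Fin n → Bool) → ℝ)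
    (hf0 : ∀ e, 0 ≤ f e) (hf : ∀ e, f (Function.update e a (!e a)) = f e) :
    ∑ e, f e ≤ ∑ e, f e * Real.exp (sgnB (e a) * v) := by
  have hinv : Function.Involutive (fun e : Fin n → Bool => Function.update e a (!e a)) := by
    intro e
    simp
  have h1 : ∑ e, f e * Real.exp (sgnB (e a) * v)
      = ∑ e, f e * Real.exp (-(sgnB (e a) * v)) := by
    rw [← Equiv.sum_comp hinv.toPerm]
    refine Finset.sum_congr rfl fun e _ => ?_
    simp only [Function.Involutive.coe_toPerm, hf, Function.update_self, sgnB_not, neg_mul]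
  have h2 : ∑ e, 2 * f e ≤ ∑ e, f e * Real.exp (sgnB (e a) * v)
      + ∑ e, f e * Real.exp (-(sgnB (e a) * v)) := by
    rw [← Finset.sum_add_distrib]
    refine Finset.sum_le_sum fun e _ => ?_
    have hc := Real.one_le_cosh (sgnB (e a) * v)
    rw [Real.cosh_eq] at hc
    nlinarith [hf0 e]
  rw [← h1, ← Finset.mul_sum] at h2
  linarith

/-- A Doob-type maximal inequality for random signs. -/
theorem doob_signs_aux {n : ℕ} (o : Fin n → ℝ) (v : Fin n → ℝ) (S : Finset (Fin n)) :
    ∃ M : (Fin n → Bool) → ℝ, (∀ e, 1 ≤ M e) ∧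
      (∀ e t, Real.exp (∑ k ∈ S.filter (fun k => o k ≤ t), sgnB (e k) * v k) ≤ M e) ∧
      (∀ e a, a ∉ S → M (Function.update e a (!e a)) = M e) ∧
      0 ≤ ∑ e, (M e * Real.exp (∑ k ∈ S, sgnB (e k) * v k) - 1 / 2 * M e ^ 2) := by
  induction S using Finset.induction_on_max_value o with
  | empty =>
    refine ⟨fun _ => 1, by simp, by simp, by simp, ?_⟩
    refine Finset.sum_nonneg fun e _ => ?_
    norm_num
  | insert a s ha hmax ih =>
    obtain ⟨M, hM1, hMt, hMi, hM⟩ := ih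
    refine ⟨fun e => max (M e) (Real.exp (∑ k ∈ insert a s, sgnB (e k) * v k)), ?_, ?_, ?_, ?_⟩
    · intro e
      exact le_max_of_le_left (hM1 e)
    · intro e t
      by_cases h : o a ≤ t
      · refine le_max_of_le_right (le_of_eq ?_)
        rw [Finset.filter_true_of_mem]
        intro x hx
        rcases Finset.mem_insert.1 hx with rfl | hx
        · exact h
        · exact (hmax x hx).trans h
      · refine le_max_of_le_left ?_
        rw [Finset.filter_insert, if_neg h]
        exact hMt e t
    · intro e b hb
      have hb1 : b ≠ a := fun h => hb (h ▸ Finset.mem_insert_self _ _)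
      have hb2 : b ∉ s := fun h => hb (Finset.mem_insert_of_mem h)
      have : ∑ k ∈ insert a s, sgnB (Function.update e b (!e b) k) * v k
          = ∑ k ∈ insert a s, sgnB (e k) * v k := by
        refine Finset.sum_congr rfl fun k hk => ?_
        rw [Function.update_of_ne]
        rintro rfl
        exact hb hk
      simp only [hMi e b hb2, this]
    · set Z : (Fin n → Bool) → ℝ := fun e => Real.exp (∑ k ∈ s, sgnB (e k) * v k) with hZ
      have hins : ∀ e : Fin n → Bool, Real.exp (∑ k ∈ insert a s, sgnB (e k) * v k)
          = Z e * Real.exp (sgnB (e a) * v a) := by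
        intro e
        rw [Finset.sum_insert ha, Real.exp_add, mul_comm]
      have hZi : ∀ e, Z (Function.update e a (!e a)) = Z e := by
        intro e
        simp only [hZ]
        congr 1
        refine Finset.sum_congr rfl fun k hk => ?_
        rw [Function.update_of_ne]
        rintro rfl
        exact ha hk
      have key := cosh_sgnB_average a (v a) (fun e => M e * Z e)
        (fun e => mul_nonneg (zero_le_one.trans (hM1 e)) (Real.exp_pos _).le)
        (fun e => by simp only [hMi e a ha, hZi e])
      have h3 : ∑ e, (M e * Z e * Real.exp (sgnB (e a) * v a) - 1 / 2 * M e ^ 2)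
          ≤ ∑ e, (max (M e) (Z e * Real.exp (sgnB (e a) * v a))
              * (Z e * Real.exp (sgnB (e a) * v a))
            - 1 / 2 * max (M e) (Z e * Real.exp (sgnB (e a) * v a)) ^ 2) := by
        refine Finset.sum_le_sum fun e _ => ?_
        rcases le_total (M e) (Z e * Real.exp (sgnB (e a) * v a)) with h | h
        · rw [max_eq_right h]
          nlinarith [sq_nonneg (M e - Z e * Real.exp (sgnB (e a) * v a))]
        · rw [max_eq_left h]
          linarith
      simp only [hins]
      refine le_trans ?_ h3
      rw [Finset.sum_sub_distrib] at hM ⊢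
      linarith

theorem sum_signs_exp {n : ℕ} (v : Fin n → ℝ) :
    ∑ e : Fin n → Bool, Real.exp (∑ k, sgnB (e k) * v k) = 2 ^ n * ∏ k, Real.cosh (v k) := by
  have h : ∏ k : Fin n, ∑ b : Bool, Real.exp (sgnB b * v k)
      = ∑ e : Fin n → Bool, ∏ k, Real.exp (sgnB (e k) * v k) := by
    rw [Finset.prod_univ_sum, Fintype.piFinset_univ]
  simp only [Real.exp_sum]
  rw [← h]
  have : ∀ k, ∑ b : Bool, Real.exp (sgnB b * v k) = 2 * Real.cosh (v k) := by
    intro k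
    rw [Real.cosh_eq]
    simp [sgnB]
    ring
  simp only [this, Finset.prod_mul_distrib]
  simp

theorem doob_signs {n : ℕ} (o : Fin n → ℝ) (v : Fin n → ℝ) (m : ℝ) :
    ∃ M : (Fin n → Bool) → ℝ, (∀ e, 1 ≤ M e) ∧
      (∀ e t, t ≤ m → Real.exp (∑ k, if o k ≤ t then sgnB (e k) * v k else 0) ≤ M e) ∧
      ∑ e, M e ^ 2 ≤ 4 * (2 ^ n * ∏ k, Real.cosh (if o k ≤ m then 2 * v k else 0)) := by
  obtain ⟨M, h1, h2, -, h4⟩ := doob_signs_aux o v (Finset.univ.filter fun k => o k ≤ m)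
  refine ⟨M, h1, ?_, ?_⟩
  · intro e t ht
    refine le_trans (le_of_eq ?_) (h2 e t)
    rw [← Finset.sum_filter, Finset.filter_filter]
    congr 2
    ext k
    simp only [Finset.mem_filter, Finset.mem_univ, true_and]
    exact ⟨fun h => ⟨h.trans ht, h⟩, fun h => h.2⟩
  · rw [← sum_signs_exp]
    have h5 : ∑ e, (M e * Real.exp (∑ k ∈ Finset.univ.filter (fun k => o k ≤ m),
          sgnB (e k) * v k) - 1 / 2 * M e ^ 2)
        ≤ ∑ e : Fin n → Bool, (Real.exp (∑ k, sgnB (e k) * (if o k ≤ m then 2 * v k else 0))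
            - 1 / 4 * M e ^ 2) := by
      refine Finset.sum_le_sum fun e _ => ?_
      have : Real.exp (∑ k, sgnB (e k) * (if o k ≤ m then 2 * v k else 0))
          = Real.exp (∑ k ∈ Finset.univ.filter (fun k => o k ≤ m), sgnB (e k) * v k) ^ 2 := by
        rw [← Real.exp_nat_mul, Finset.sum_filter, Finset.mul_sum]
        congr 1
        refine Finset.sum_congr rfl fun k _ => ?_
        split_ifs
        · push_cast; ring
        · simp
      rw [this]
      nlinarith [sq_nonneg (M e / 2 - Real.exp (∑ k ∈ Finset.univ.filter (fun k => o k ≤ m),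
        sgnB (e k) * v k))]
    have h6 := h4.trans h5
    rw [Finset.sum_sub_distrib, ← Finset.mul_sum] at h6
    linarith

/-- Swap the coordinates of a pair of samples according to a vector of Booleans. -/
def swapB {n : ℕ} (e : Fin n → Bool) (p : (Fin n → ℝ) × (Fin n → ℝ)) :
    (Fin n → ℝ) × (Fin n → ℝ) :=
  (fun k => if e k then p.1 k else p.2 k, fun k => if e k then p.2 k else p.1 k)

theorem swapB_preserving {n : ℕ} (ν : Fin n → Measure ℝ) [∀ k, IsProbabilityMeasure (ν k)]
    (e : Fin n → Bool) :
    MeasurePreserving (swapB e) ((Measure.pi ν).prod (Measure.pi ν))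
      ((Measure.pi ν).prod (Measure.pi ν)) := by
  have h1 := measurePreserving_arrowProdEquivProdArrow ℝ ℝ (Fin n) ν ν
  have h2 : MeasurePreserving
      (fun (a : Fin n → ℝ × ℝ) (i : Fin n) => (if e i then id else Prod.swap) (a i))
      (Measure.pi fun i => (ν i).prod (ν i)) (Measure.pi fun i => (ν i).prod (ν i)) := by
    refine measurePreserving_pi (fun i => (ν i).prod (ν i)) (fun i => (ν i).prod (ν i))
      (f := fun i => if e i then id else Prod.swap) (fun i => ?_)
    cases e i
    · simpa using Measure.measurePreserving_swap
    · simpa using MeasurePreserving.id _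
  have h3 := (h1.comp h2).comp (h1.symm _)
  convert h3 using 1
  funext p
  refine Prod.ext ?_ ?_ <;> funext k <;>
    simp only [swapB, Function.comp, MeasurableEquiv.arrowProdEquivProdArrow,
      Equiv.arrowProdEquivProdArrow, MeasurableEquiv.symm, MeasurableEquiv.coe_mk,
      Equiv.coe_fn_mk, Equiv.coe_fn_symm_mk] <;>
    cases e k <;> simp

theorem measurable_Xclock_joint {n : ℕ} {α : Type*} [MeasurableSpace α] (w : Fin n → ℝ)
    (t : α → ℝ) (o : α → Fin n → ℝ) (ht : Measurable t) (ho : Measurable o) :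
    Measurable fun a => Xclock w (t a) (o a) := by
  unfold Xclock
  refine Finset.measurable_sum _ fun k _ => ?_
  refine Measurable.ite ?_ measurable_const measurable_const
  exact measurableSet_le ((measurable_pi_apply k).comp ho) ht

theorem Xclock_abs_le {n : ℕ} (w : Fin n → ℝ) (t : ℝ) (o : Fin n → ℝ) :
    |Xclock w t o| ≤ ∑ k, |w k| := by
  unfold Xclock
  refine (Finset.abs_sum_le_sum_abs _ _).trans (Finset.sum_le_sum fun k _ => ?_)
  split_ifs <;> simp

/-- The symmetrized exponential at a given time. -/
noncomputable def gexp {n : ℕ} (w : Fin n → ℝ) (θ t : ℝ) (p : (Fin n → ℝ) × (Fin n → ℝ)) : ℝ≥0∞ :=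
  ENNReal.ofReal (Real.exp (θ * (Xclock w t p.1 - Xclock w t p.2)))

/-- A measurable version of the supremum over `t ≤ m` of the symmetrized exponential. -/
noncomputable def gsup {n : ℕ} (w : Fin n → ℝ) (θ m : ℝ) (p : (Fin n → ℝ) × (Fin n → ℝ)) : ℝ≥0∞ :=
  1 ⊔ ⨆ i : Fin n ⊕ Fin n, gexp w θ (min (Sum.elim p.1 p.2 i) m) p

theorem measurable_gsup {n : ℕ} (w : Fin n → ℝ) (θ m : ℝ) : Measurable (gsup w θ m) := by
  unfold gsup gexp
  suffices h : ∀ i : Fin n ⊕ Fin n, Measurable fun p : (Fin n → ℝ) × (Fin n → ℝ) =>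
      ENNReal.ofReal (Real.exp (θ * (Xclock w (min (Sum.elim p.1 p.2 i) m) p.1
        - Xclock w (min (Sum.elim p.1 p.2 i) m) p.2))) from
    Measurable.max measurable_const (Measurable.iSup h)
  intro i
  have ht : Measurable fun p : (Fin n → ℝ) × (Fin n → ℝ) => min (Sum.elim p.1 p.2 i) m := by
    rcases i with i | i
    · exact ((measurable_pi_apply i).comp measurable_fst).min measurable_const
    · exact ((measurable_pi_apply i).comp measurable_snd).min measurable_const
  have h1 := measurable_Xclock_joint w _ _ ht measurable_fst
  have h2 := measurable_Xclock_joint w _ _ ht measurable_snd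
  exact ENNReal.measurable_ofReal.comp (Real.measurable_exp.comp ((h1.sub h2).const_mul θ))

theorem gexp_le_gsup {n : ℕ} (w : Fin n → ℝ) (θ m t : ℝ) (ht : t ≤ m)
    (p : (Fin n → ℝ) × (Fin n → ℝ)) : gexp w θ t p ≤ gsup w θ m p := by
  by_cases hne : (Finset.univ.filter fun i => Sum.elim p.1 p.2 i ≤ t).Nonempty
  · obtain ⟨i, hi, hmax⟩ := Finset.exists_max_image _ (Sum.elim p.1 p.2) hne
    simp only [Finset.mem_filter, Finset.mem_univ, true_and] at hi hmax
    have hiff : ∀ j, Sum.elim p.1 p.2 j ≤ t ↔ Sum.elim p.1 p.2 j ≤ min (Sum.elim p.1 p.2 i) m :=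
      fun j => ⟨fun h => le_min (hmax j h) (h.trans ht), fun h => (h.trans (min_le_left _ _)).trans hi⟩
    have h1 : Xclock w t p.1 = Xclock w (min (Sum.elim p.1 p.2 i) m) p.1 := by
      unfold Xclock
      refine Finset.sum_congr rfl fun k _ => ?_
      have := hiff (Sum.inl k)
      simp only [Sum.elim_inl] at this
      simp only [this]
    have h2 : Xclock w t p.2 = Xclock w (min (Sum.elim p.1 p.2 i) m) p.2 := by
      unfold Xclock
      refine Finset.sum_congr rfl fun k _ => ?_
      have := hiff (Sum.inr k)
      simp only [Sum.elim_inr] at this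
      simp only [this]
    refine le_sup_of_le_right (le_iSup_of_le i (le_of_eq ?_))
    unfold gexp
    rw [← h1, ← h2]
  · refine le_sup_of_le_left (le_of_eq ?_)
    have hn : ∀ j, ¬ Sum.elim p.1 p.2 j ≤ t := by
      intro j hj
      exact hne ⟨j, by simpa using hj⟩
    have h1 : Xclock w t p.1 = 0 := by
      unfold Xclock
      exact Finset.sum_eq_zero fun k _ => if_neg (hn (Sum.inl k))
    have h2 : Xclock w t p.2 = 0 := by
      unfold Xclock
      exact Finset.sum_eq_zero fun k _ => if_neg (hn (Sum.inr k))
    simp [gexp, h1, h2]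

theorem Xclock_swapB {n : ℕ} (w : Fin n → ℝ) (θ t : ℝ) (e : Fin n → Bool)
    (p : (Fin n → ℝ) × (Fin n → ℝ)) :
    θ * (Xclock w t (swapB e p).1 - Xclock w t (swapB e p).2)
      = (∑ k, if p.1 k ≤ t then sgnB (e k) * (θ * w k) else 0)
        + ∑ k, if p.2 k ≤ t then sgnB (e k) * (-(θ * w k)) else 0 := by
  unfold Xclock swapB sgnB
  rw [← Finset.sum_sub_distrib, Finset.mul_sum, ← Finset.sum_add_distrib]
  refine Finset.sum_congr rfl fun k _ => ?_
  by_cases he : e k = true <;> by_cases h1 : p.1 k ≤ t <;> by_cases h2 : p.2 k ≤ t <;>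
    simp [he, h1, h2]

/-- The product of hyperbolic cosines. -/
noncomputable def cprod {n : ℕ} (w : Fin n → ℝ) (θ m : ℝ) (o : Fin n → ℝ) : ℝ :=
  ∏ k, Real.cosh (if o k ≤ m then 2 * (θ * w k) else 0)

theorem cprod_pos {n : ℕ} (w : Fin n → ℝ) (θ m : ℝ) (o : Fin n → ℝ) : 0 < cprod w θ m o :=
  Finset.prod_pos fun _ _ => Real.cosh_pos _

theorem sum_gsup_le {n : ℕ} (w : Fin n → ℝ) (θ m : ℝ) (p : (Fin n → ℝ) × (Fin n → ℝ)) :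
    ∑ e, gsup w θ m (swapB e p)
      ≤ ENNReal.ofReal (2 ^ n * (2 * (cprod w θ m p.1 + cprod w θ m p.2))) := by
  obtain ⟨M, hM1, hMt, hM⟩ := doob_signs p.1 (fun k => θ * w k) m
  obtain ⟨N, hN1, hNt, hN⟩ := doob_signs p.2 (fun k => -(θ * w k)) m
  have hb : ∀ e, gsup w θ m (swapB e p) ≤ ENNReal.ofReal ((M e ^ 2 + N e ^ 2) / 2) := by
    intro e
    have h1 : M e * N e ≤ (M e ^ 2 + N e ^ 2) / 2 := by nlinarith [sq_nonneg (M e - N e)]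
    have h2 : 1 ≤ M e * N e := by nlinarith [hM1 e, hN1 e]
    refine sup_le ?_ (iSup_le fun i => ?_)
    · rw [← ENNReal.ofReal_one]
      exact ENNReal.ofReal_le_ofReal (h2.trans h1)
    · unfold gexp
      refine ENNReal.ofReal_le_ofReal (le_trans ?_ h1)
      rw [Xclock_swapB, Real.exp_add]
      exact mul_le_mul (hMt e _ (min_le_right _ _)) (hNt e _ (min_le_right _ _))
        (Real.exp_pos _).le (zero_le_one.trans (hM1 e))
  refine (Finset.sum_le_sum fun e _ => hb e).trans ?_
  rw [← ENNReal.ofReal_sum_of_nonneg (fun e _ => by positivity)]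
  refine ENNReal.ofReal_le_ofReal ?_
  rw [← Finset.sum_div, Finset.sum_add_distrib]
  have hc : ∏ k, Real.cosh (if p.2 k ≤ m then 2 * -(θ * w k) else 0) = cprod w θ m p.2 := by
    unfold cprod
    refine Finset.prod_congr rfl fun k _ => ?_
    split_ifs
    · rw [mul_neg, Real.cosh_neg]
    · rfl
  rw [hc] at hN
  change _ ≤ 4 * (2 ^ n * cprod w θ m p.1) at hM
  linarith

theorem sum_lintegral_le {α ι : Type*} [MeasurableSpace α] (P : Measure α) (s : Finset ι)
    (f : ι → α → ℝ≥0∞) : ∑ i ∈ s, ∫⁻ a, f i a ∂P ≤ ∫⁻ a, ∑ i ∈ s, f i a ∂P := by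
  induction s using Finset.induction_on with
  | empty => simp
  | insert a s ha ih =>
    simp only [Finset.sum_insert ha]
    exact (add_le_add le_rfl ih).trans (le_lintegral_add _ _)

theorem measurable_cprod {n : ℕ} (w : Fin n → ℝ) (θ m : ℝ) : Measurable (cprod w θ m) := by
  unfold cprod
  refine Finset.measurable_prod _ fun k _ => Real.measurable_cosh.comp ?_
  exact Measurable.ite (measurableSet_le (measurable_pi_apply k) measurable_const)
    measurable_const measurable_const

theorem lintegral_gsup_le {n : ℕ} (ν : Fin n → Measure ℝ) [∀ k, IsProbabilityMeasure (ν k)]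
    (w : Fin n → ℝ) (θ m : ℝ) :
    ∫⁻ p, gsup w θ m p ∂((Measure.pi ν).prod (Measure.pi ν))
      ≤ 4 * ∫⁻ o, ENNReal.ofReal (cprod w θ m o) ∂(Measure.pi ν) := by
  set Q := (Measure.pi ν).prod (Measure.pi ν) with hQ
  have h1 : ∀ e : Fin n → Bool, ∫⁻ p, gsup w θ m (swapB e p) ∂Q = ∫⁻ p, gsup w θ m p ∂Q :=
    fun e => (swapB_preserving ν e).lintegral_comp (measurable_gsup w θ m)
  have h2 : (2 : ℝ≥0∞) ^ n * ∫⁻ p, gsup w θ m p ∂Q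
      ≤ ∫⁻ p, ENNReal.ofReal (2 ^ n * (2 * (cprod w θ m p.1 + cprod w θ m p.2))) ∂Q := by
    calc (2 : ℝ≥0∞) ^ n * ∫⁻ p, gsup w θ m p ∂Q
        = ∑ e : Fin n → Bool, ∫⁻ p, gsup w θ m (swapB e p) ∂Q := by
          simp [h1]
      _ ≤ ∫⁻ p, ∑ e : Fin n → Bool, gsup w θ m (swapB e p) ∂Q := sum_lintegral_le _ _ _
      _ ≤ _ := lintegral_mono fun p => sum_gsup_le w θ m p
  have hmc : Measurable fun o => ENNReal.ofReal (cprod w θ m o) :=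
    ENNReal.measurable_ofReal.comp (measurable_cprod w θ m)
  have h3 : ∫⁻ p, ENNReal.ofReal (2 ^ n * (2 * (cprod w θ m p.1 + cprod w θ m p.2))) ∂Q
      = 2 ^ n * (4 * ∫⁻ o, ENNReal.ofReal (cprod w θ m o) ∂(Measure.pi ν)) := by
    have he : ∀ p : (Fin n → ℝ) × (Fin n → ℝ),
        ENNReal.ofReal (2 ^ n * (2 * (cprod w θ m p.1 + cprod w θ m p.2)))
        = 2 ^ n * 2 * (ENNReal.ofReal (cprod w θ m p.1) + ENNReal.ofReal (cprod w θ m p.2)) := by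
      intro p
      rw [ENNReal.ofReal_mul (by positivity), ENNReal.ofReal_mul (by positivity),
        ENNReal.ofReal_add (cprod_pos _ _ _ _).le (cprod_pos _ _ _ _).le,
        ENNReal.ofReal_pow (by norm_num)]
      simp [mul_assoc]
    simp only [he]
    have hm1 : Measurable fun p : (Fin n → ℝ) × (Fin n → ℝ) => ENNReal.ofReal (cprod w θ m p.1) :=
      hmc.comp measurable_fst
    have hm2 : Measurable fun p : (Fin n → ℝ) × (Fin n → ℝ) => ENNReal.ofReal (cprod w θ m p.2) :=
      hmc.comp measurable_snd
    rw [lintegral_const_mul _ (by fun_prop), lintegral_add_left hm1]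
    have ha : ∫⁻ p, ENNReal.ofReal (cprod w θ m p.1) ∂Q
        = ∫⁻ o, ENNReal.ofReal (cprod w θ m o) ∂(Measure.pi ν) :=
      (measurePreserving_fst (μ := Measure.pi ν) (ν := Measure.pi ν)).lintegral_comp hmc
    have hb : ∫⁻ p, ENNReal.ofReal (cprod w θ m p.2) ∂Q
        = ∫⁻ o, ENNReal.ofReal (cprod w θ m o) ∂(Measure.pi ν) :=
      (measurePreserving_snd (μ := Measure.pi ν) (ν := Measure.pi ν)).lintegral_comp hmc
    rw [ha, hb]
    ring
  rw [h3] at h2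
  exact (ENNReal.mul_le_mul_iff_right (by simp) (by simp)).1 h2

theorem jensen_clock {n : ℕ} (P : Measure (Fin n → ℝ)) [IsProbabilityMeasure P]
    (w : Fin n → ℝ) (θ t : ℝ) (o : Fin n → ℝ) :
    ENNReal.ofReal (Real.exp (θ * (Xclock w t o - ∫ o', Xclock w t o' ∂P)))
      ≤ ∫⁻ o', gexp w θ t (o, o') ∂P := by
  have hm : Measurable fun o' => Xclock w t o' :=
    measurable_Xclock_joint w (fun _ => t) id measurable_const measurable_id
  have hi : Integrable (fun o' => Xclock w t o') P :=
    Integrable.of_bound hm.aestronglyMeasurable (∑ k, |w k|)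
      (Eventually.of_forall fun o' => Xclock_abs_le w t o')
  have hi2 : Integrable (fun o' => θ * (Xclock w t o - Xclock w t o')) P :=
    ((integrable_const _).sub hi).const_mul θ
  have hi3 : Integrable (fun o' => Real.exp (θ * (Xclock w t o - Xclock w t o'))) P := by
    refine Integrable.of_bound
      (Real.measurable_exp.comp ((measurable_const.sub hm).const_mul θ)).aestronglyMeasurable
      (Real.exp (|θ| * (2 * ∑ k, |w k|))) (Eventually.of_forall fun o' => ?_)
    rw [Real.norm_eq_abs, Real.abs_exp]
    refine Real.exp_le_exp.2 ((le_abs_self _).trans ?_)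
    rw [abs_mul]
    refine mul_le_mul_of_nonneg_left ?_ (abs_nonneg _)
    refine (abs_sub _ _).trans ?_
    linarith [Xclock_abs_le w t o, Xclock_abs_le w t o']
  have hj := convexOn_exp.map_integral_le Real.continuous_exp.continuousOn isClosed_univ
    (Eventually.of_forall fun _ => Set.mem_univ _) hi2 hi3
  rw [integral_const_mul, integral_sub (integrable_const _) hi] at hj
  simp only [integral_const, probReal_univ, one_smul] at hj
  unfold gexp
  rw [← ofReal_integral_eq_lintegral_ofReal hi3 (Eventually.of_forall fun _ => (Real.exp_pos _).le)]
  exact ENNReal.ofReal_le_ofReal hj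

theorem markov_clock {n : ℕ} (ν : Fin n → Measure ℝ) [∀ k, IsProbabilityMeasure (ν k)]
    (w : Fin n → ℝ) (θ m y : ℝ) (hθ : 0 ≤ θ) :
    ENNReal.ofReal (Real.exp (θ * y)) * Measure.pi ν
        {o | ∃ t : ℝ, 0 ≤ t ∧ t ≤ m ∧ y ≤ Xclock w t o - ∫ o', Xclock w t o' ∂(Measure.pi ν)}
      ≤ 4 * ∫⁻ o, ENNReal.ofReal (cprod w θ m o) ∂(Measure.pi ν) := by
  have hg := (measurable_gsup w θ m)
  refine le_trans ?_ (lintegral_gsup_le ν w θ m)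
  rw [lintegral_prod _ hg.aemeasurable]
  refine le_trans ?_ (mul_meas_ge_le_lintegral hg.lintegral_prod_right'
    (ENNReal.ofReal (Real.exp (θ * y))))
  refine mul_le_mul_right (measure_mono ?_) _
  rintro o ⟨t, -, htm, hy⟩
  refine le_trans ?_ (lintegral_mono fun o' => gexp_le_gsup w θ m t htm (o, o'))
  refine le_trans ?_ (jensen_clock (Measure.pi ν) w θ t o)
  exact ENNReal.ofReal_le_ofReal (Real.exp_le_exp.2 (mul_le_mul_of_nonneg_left hy hθ))

theorem integral_cosh_le (ν : Measure ℝ) [IsProbabilityMeasure ν] (c m F : ℝ)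
    (hF : ν.real (Set.Iic m) ≤ F) (hc : |c| ≤ 1) :
    ∫ x, Real.cosh (if x ≤ m then c else 0) ∂ν ≤ Real.exp (F * c ^ 2) := by
  have h1 : ∀ x, Real.cosh (if x ≤ m then c else 0)
      = 1 + (Set.Iic m).indicator (fun _ => Real.cosh c - 1) x := by
    intro x
    by_cases h : x ≤ m <;> simp [h]
  simp only [h1]
  rw [integral_add (integrable_const _)
    ((integrable_const _).indicator measurableSet_Iic), integral_indicator_const _ measurableSet_Iic]
  simp only [integral_const, probReal_univ, smul_eq_mul, one_mul]
  have hc2 : c ^ 2 ≤ 1 := by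
    rw [← sq_abs]
    exact pow_le_one₀ (abs_nonneg _) hc
  have h2 : Real.cosh c - 1 ≤ c ^ 2 := by
    have h3 := Real.cosh_le_exp_half_sq c
    have h4 := Real.abs_exp_sub_one_le (x := c ^ 2 / 2) (by rw [abs_of_nonneg (by positivity)]; linarith)
    rw [abs_of_nonneg (by positivity : 0 ≤ c ^ 2 / 2)] at h4
    have h5 := (le_abs_self _).trans h4
    linarith
  have h3 : 0 ≤ ν.real (Set.Iic m) := measureReal_nonneg
  have h4 : ν.real (Set.Iic m) * (Real.cosh c - 1) ≤ F * c ^ 2 :=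
    mul_le_mul hF h2 (by linarith [Real.one_le_cosh c]) (h3.trans hF)
  linarith [Real.add_one_le_exp (F * c ^ 2)]

theorem lintegral_cprod_le {n : ℕ} (ν : Fin n → Measure ℝ) [∀ k, IsProbabilityMeasure (ν k)]
    (w : Fin n → ℝ) (θ m : ℝ) (F : Fin n → ℝ) (hF : ∀ k, (ν k).real (Set.Iic m) ≤ F k)
    (hc : ∀ k, |2 * (θ * w k)| ≤ 1) :
    ∫⁻ o, ENNReal.ofReal (cprod w θ m o) ∂(Measure.pi ν)
      ≤ ENNReal.ofReal (Real.exp (∑ k, F k * (2 * (θ * w k)) ^ 2)) := by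
  have hi : Integrable (cprod w θ m) (Measure.pi ν) := by
    refine Integrable.of_bound (measurable_cprod w θ m).aestronglyMeasurable
      (∏ k, Real.cosh (2 * (θ * w k))) (Eventually.of_forall fun o => ?_)
    rw [Real.norm_eq_abs, abs_of_pos (cprod_pos _ _ _ _)]
    refine Finset.prod_le_prod (fun k _ => (Real.cosh_pos _).le) fun k _ => ?_
    split_ifs
    · exact le_rfl
    · rw [Real.cosh_zero]
      exact Real.one_le_cosh _
  rw [← ofReal_integral_eq_lintegral_ofReal hi (Eventually.of_forall fun o => (cprod_pos _ _ _ _).le)]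
  refine ENNReal.ofReal_le_ofReal ?_
  unfold cprod
  rw [integral_fintype_prod_eq_prod (fun k x => Real.cosh (if x ≤ m then 2 * (θ * w k) else 0)),
    Real.exp_sum]
  refine Finset.prod_le_prod (fun k _ => integral_nonneg fun x => (Real.cosh_pos _).le) fun k _ => ?_
  exact integral_cosh_le (ν k) _ m (F k) (hF k) (hc k)

theorem expMeasure_Iic_le (r m : ℝ) (hr : 0 < r) (hm : 0 ≤ m) :
    (ProbabilityTheory.expMeasure r).real (Set.Iic m) ≤ r * m := by
  have := ProbabilityTheory.isProbabilityMeasure_expMeasure hr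
  rw [← ProbabilityTheory.cdf_eq_real, ProbabilityTheory.cdf_expMeasure_eq hr, if_pos hm]
  linarith [Real.add_one_le_exp (-(r * m))]

/-- The non-asymptotic bound. -/
theorem clock_bound {n : ℕ} (w : Fin n → ℝ) (hw : ∀ k, 0 < w k) (C b m y : ℝ)
    (hC : 0 < C) (hm : 0 < m) (hy : 0 < y)
    (hcube : ∑ k, w k ^ 3 ≤ C * ∑ k, w k) (hb : ∀ k, w k ≤ b) (hb0 : 0 < b) :
    clocksMeasure n w {o | ∃ t : ℝ, 0 ≤ t ∧ t ≤ m ∧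
          y ≤ Xclock w t o - ∫ o', Xclock w t o' ∂clocksMeasure n w}
      ≤ ENNReal.ofReal ((16 * C + 4) * Real.exp (-y ^ 2 / ((16 * C + 4) * (y * b + m)))) := by
  have hl : ∀ k : Fin n, 0 < w k / ∑ i, w i := fun k =>
    div_pos (hw k) (Finset.sum_pos (fun i _ => hw i) ⟨k, Finset.mem_univ k⟩)
  have hprob : ∀ k : Fin n, IsProbabilityMeasure (ProbabilityTheory.expMeasure (w k / ∑ i, w i)) :=
    fun k => ProbabilityTheory.isProbabilityMeasure_expMeasure (hl k)
  set K : ℝ := 8 * C + 2 with hK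
  have hK0 : 0 < K := by positivity
  set D : ℝ := y * b + m with hD
  have hD0 : 0 < D := by positivity
  set θ : ℝ := y / (K * D) with hθ
  have hθ0 : 0 < θ := by positivity
  have hc : ∀ k, |2 * (θ * w k)| ≤ 1 := by
    intro k
    have := hw k
    rw [abs_of_nonneg (by positivity), hθ, div_mul_eq_mul_div, mul_div_assoc', div_le_one (by positivity)]
    have h1 : y * w k ≤ D := by
      have := mul_le_mul_of_nonneg_left (hb k) hy.le
      rw [hD]; linarith
    nlinarith
  have h1 := markov_clock (fun k => ProbabilityTheory.expMeasure (w k / ∑ i, w i)) w θ m y hθ0.le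
  have h2 := lintegral_cprod_le (fun k => ProbabilityTheory.expMeasure (w k / ∑ i, w i)) w θ m
    (fun k => w k / (∑ i, w i) * m) (fun k => expMeasure_Iic_le _ m (hl k) hm.le) hc
  have h3 : ∑ k, w k / (∑ i, w i) * m * (2 * (θ * w k)) ^ 2 ≤ 4 * C * θ ^ 2 * m := by
    have he : ∀ k, w k / (∑ i, w i) * m * (2 * (θ * w k)) ^ 2
        = 4 * θ ^ 2 * m / (∑ i, w i) * w k ^ 3 := by
      intro k
      ring
    simp only [he]
    rw [← Finset.mul_sum]
    rcases (Finset.sum_nonneg fun i (_ : i ∈ Finset.univ) => (hw i).le).eq_or_lt with h | h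
    · rw [← h]
      simp only [div_zero, zero_mul]
      positivity
    · calc 4 * θ ^ 2 * m / (∑ i, w i) * ∑ i, w i ^ 3
          ≤ 4 * θ ^ 2 * m / (∑ i, w i) * (C * ∑ i, w i) :=
            mul_le_mul_of_nonneg_left hcube (by positivity)
        _ = 4 * C * θ ^ 2 * m := by field_simp
  have h4 : 4 * C * θ ^ 2 * m - θ * y ≤ -y ^ 2 / ((16 * C + 4) * D) := by
    have hx : θ ^ 2 * m ≤ y ^ 2 / (K ^ 2 * D) := by
      rw [hθ, div_pow, div_mul_eq_mul_div, div_le_div_iff₀ (by positivity) (by positivity)]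
      have : m ≤ D := by rw [hD]; nlinarith
      have h5 : 0 ≤ y ^ 2 * K ^ 2 * D := by positivity
      nlinarith [mul_le_mul_of_nonneg_left this h5]
    have hy2 : θ * y = y ^ 2 / (K * D) := by rw [hθ]; ring
    have h16 : (16 * C + 4) * D = 2 * (K * D) := by rw [hK]; ring
    have hz : 4 * C * (y ^ 2 / (K ^ 2 * D)) ≤ y ^ 2 / (K * D) / 2 := by
      have : 4 * C * (y ^ 2 / (K ^ 2 * D)) = y ^ 2 / (K * D) * (4 * C / K) := by
        field_simp
      rw [this, div_eq_mul_inv (y ^ 2 / (K * D)) 2]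
      refine mul_le_mul_of_nonneg_left ?_ (by positivity)
      rw [div_le_iff₀ hK0]
      linarith
    have hw2 : -y ^ 2 / (2 * (K * D)) = -(y ^ 2 / (K * D)) / 2 := by
      field_simp
    rw [h16, hw2, hy2]
    nlinarith [mul_le_mul_of_nonneg_left hx (by positivity : 0 ≤ 4 * C)]
  have h5 := h1.trans (mul_le_mul_right h2 4)
  change ENNReal.ofReal (Real.exp (θ * y)) * clocksMeasure n w {o | ∃ t : ℝ, 0 ≤ t ∧ t ≤ m ∧
          y ≤ Xclock w t o - ∫ o', Xclock w t o' ∂clocksMeasure n w} ≤ _ at h5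
  have hne : ENNReal.ofReal (Real.exp (θ * y)) ≠ 0 := by
    simpa using Real.exp_pos (θ * y)
  refine (ENNReal.mul_le_mul_iff_right hne ENNReal.ofReal_ne_top).1 (h5.trans ?_)
  rw [← ENNReal.ofReal_mul (Real.exp_pos _).le,
    show (4 : ℝ≥0∞) = ENNReal.ofReal 4 by simp, ← ENNReal.ofReal_mul (by norm_num)]
  refine ENNReal.ofReal_le_ofReal ?_
  calc 4 * Real.exp (∑ k, w k / (∑ i, w i) * m * (2 * (θ * w k)) ^ 2)
      ≤ (16 * C + 4) * Real.exp (θ * y + -y ^ 2 / ((16 * C + 4) * D)) := by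
        refine mul_le_mul (by linarith) (Real.exp_le_exp.2 (by linarith)) (Real.exp_pos _).le
          (by positivity)
    _ = _ := by
        rw [Real.exp_add]; ring

theorem condC_eventually (w : ∀ n : ℕ, Fin n → ℝ) (μ : Measure ℝ) (hC : CondC w μ) :
    ∃ C > (0 : ℝ), ∀ᶠ n : ℕ in atTop, (∑ k, w n k ^ 3 ≤ C * ∑ k, w n k) ∧
      (∀ k, w n k ≤ (n : ℝ) ^ ((1 : ℝ) / 3)) := by
  have := hC.isProb
  have hintg : Integrable (fun x : ℝ => x) μ := by
    refine ((integrable_const (1 : ℝ)).add hC.int3).mono' measurable_id.aestronglyMeasurable ?_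
    filter_upwards [hC.pos] with x hx
    simp only [Pi.add_apply, Real.norm_eq_abs, abs_of_pos hx]
    rcases le_total x 1 with h | h
    · have : 0 < x ^ 3 := by positivity
      linarith
    · nlinarith [mul_self_nonneg (x - 1), mul_nonneg (sub_nonneg.2 h) (sub_nonneg.2 h)]
  have hE : 0 < ∫ x, x ∂μ := by
    rw [integral_pos_iff_support_of_nonneg_ae (hC.pos.mono fun x hx => hx.le) hintg]
    have hs : (Function.support fun x : ℝ => x) =ᵐ[μ] Set.univ := by
      filter_upwards [hC.pos] with x hx
      exact propext ⟨fun _ => trivial, fun _ => hx.ne'⟩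
    rw [measure_congr hs]
    simp
  have hE3 : 0 ≤ ∫ x, x ^ 3 ∂μ :=
    integral_nonneg_of_ae (hC.pos.mono fun x hx => by positivity)
  set E := ∫ x, x ∂μ with hEdef
  set E3 := ∫ x, x ^ 3 ∂μ with hE3def
  refine ⟨2 * (E3 + 1) / E, by positivity, ?_⟩
  have h1 := hC.ell_asymp.def (c := E / 2) (by positivity)
  have h2 := hC.cube_asymp.def (c := 1) one_pos
  have h3 := hC.max_asymp.def (c := 1) one_pos
  filter_upwards [h1, h2, h3, eventually_ge_atTop 1] with n h1 h2 h3 hn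
  have hn1 : (1 : ℝ) ≤ n := by exact_mod_cast hn
  constructor
  · have ha : (n : ℝ) ^ ((2 : ℝ) / 3) ≤ n := by
      calc (n : ℝ) ^ ((2 : ℝ) / 3) ≤ (n : ℝ) ^ (1 : ℝ) :=
            Real.rpow_le_rpow_of_exponent_le hn1 (by norm_num)
        _ = n := Real.rpow_one _
    rw [Real.norm_eq_abs, Real.norm_eq_abs, abs_of_nonneg (by positivity : 0 ≤ (n : ℝ) ^ ((2 : ℝ) / 3))] at h1
    have h1' := (abs_le.1 h1).1
    rw [Real.norm_eq_abs, norm_one] at h2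
    have h2' := (abs_le.1 h2).2
    have hl : E / 2 * n ≤ ∑ k, w n k := by
      have : E / 2 * (n : ℝ) ^ ((2 : ℝ) / 3) ≤ E / 2 * n :=
        mul_le_mul_of_nonneg_left ha (by positivity)
      simp only [ell] at h1'
      linarith
    calc ∑ k, w n k ^ 3 ≤ (E3 + 1) * n := by linarith
      _ = 2 * (E3 + 1) / E * (E / 2 * n) := by field_simp
      _ ≤ _ := mul_le_mul_of_nonneg_left hl (by positivity)
  · intro k
    rw [one_mul, Real.norm_eq_abs, Real.norm_eq_abs,
      abs_of_nonneg (by positivity : 0 ≤ (n : ℝ) ^ ((1 : ℝ) / 3))] at h3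
    exact (le_ciSup (Set.finite_range (w n)).bddAbove k).trans ((le_abs_self _).trans h3)


/-- Lemma of the paper, chaining bound: uniform concentration of
`X(t) − E[X(t)]` for `0 ≤ t ≤ m`. -/
theorem clock_process_uniform_concentration
    (w : ∀ n : ℕ, Fin n → ℝ) (μ : Measure ℝ) (hC : CondC w μ) :
    ∃ Abar > (0 : ℝ), ∃ A > (0 : ℝ), ∀ m y : ℕ → ℝ, Cond2 w Abar m y →
      ∀ᶠ n : ℕ in atTop,
        clocksMeasure n (w n)
          {ω : Fin n → ℝ | ∃ t : ℝ, 0 ≤ t ∧ t ≤ m n ∧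
            y n ≤ Xclock (w n) t ω - ∫ ω', Xclock (w n) t ω' ∂clocksMeasure n (w n)}
        ≤ ENNReal.ofReal
            (A * Real.exp (-(y n) ^ 2 / (A * (y n * (n : ℝ) ^ ((1 : ℝ) / 3) + m n)))) := by
  obtain ⟨C, hC0, hev⟩ := condC_eventually w μ hC
  refine ⟨1, one_pos, 16 * C + 4, by positivity, ?_⟩
  intro m y h2
  filter_upwards [hev, h2.a_top.eventually_gt_atTop 0, h2.b_top.eventually_gt_atTop 0,
    eventually_ge_atTop 1] with n hn hm hy hn1
  have hn2 : (0 : ℝ) < n := by exact_mod_cast hn1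
  exact clock_bound (w n) (hC.w_pos n) C _ (m n) (y n) hC0 hm hy hn.1 hn.2 (by positivity)
end
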